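/- arXiv:2509.26237 — 2 statements merged into one kernel-verified Lean document; each statement's English description precedes it below -/
import Mathlib

section
/- Let K be a field. Let P₁, P₂ ∈ Sp(4, K) be cyclic and strictly hyperbolic symplectic matrices. Then for every M ∈ Sp(4, K) with M² ≠ I₄, there exist S₁, S₂ ∈ Sp(4, K) such that M = (S₁ P₁ S₁⁻¹) · (S₂ P₂ S₂⁻¹). -/
open Matrix Polynomial

noncomputable section

/-- The standard symplectic form matrix `G = [[0, Iₙ], [-Iₙ, 0]]`. -/
def sympJ (n : ℕ) (K : Type*) [Field K] : Matrix (Fin n ⊕ Fin n) (Fin n ⊕ Fin n) K :=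
  Matrix.fromBlocks 0 1 (-1) 0

/-- Membership in the standard symplectic group `Sp(2n, K)`: `P G Pᵀ = G`. -/
def IsSymplectic {n : ℕ} {K : Type*} [Field K]
    (P : Matrix (Fin n ⊕ Fin n) (Fin n ⊕ Fin n) K) : Prop :=
  P * sympJ n K * Pᵀ = sympJ n K

/-- A matrix is cyclic if its characteristic polynomial equals its minimal polynomial. -/
def IsCyclicMat {ι : Type*} [Fintype ι] [DecidableEq ι] {K : Type*} [Field K]
    (A : Matrix ι ι K) : Prop :=
  A.charpoly = minpoly K A

/-- The reciprocal polynomial `q*(x) = q(0)⁻¹ xⁿ q(1/x)` of a polynomial `q`. -/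
def recipPoly {K : Type*} [Field K] (q : Polynomial K) : Polynomial K :=
  Polynomial.C (q.coeff 0)⁻¹ * q.reverse

/-- A symplectic matrix is strictly hyperbolic if its minimal polynomial is `q q*`
with `q` monic of degree `n`, `q(0) ≠ 0`, and `q` coprime to its reciprocal `q*`. -/
def IsStrictlyHyperbolic {n : ℕ} {K : Type*} [Field K]
    (P : Matrix (Fin n ⊕ Fin n) (Fin n ⊕ Fin n) K) : Prop :=
  ∃ q : Polynomial K, q.Monic ∧ q.natDegree = n ∧ q.coeff 0 ≠ 0 ∧
    IsCoprime q (recipPoly q) ∧ minpoly K P = q * recipPoly q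


abbrev Vec (K : Type*) := Fin 2 ⊕ Fin 2 → K

/-- The symplectic form on column vectors. -/
def om {K : Type*} [Field K] (x y : Vec K) : K :=
  x (Sum.inl 0) * y (Sum.inr 0) + x (Sum.inl 1) * y (Sum.inr 1)
    - x (Sum.inr 0) * y (Sum.inl 0) - x (Sum.inr 1) * y (Sum.inl 1)

section basics
variable {K : Type*} [Field K]

lemma om_add_left (x y z : Vec K) : om (x + y) z = om x z + om y z := by
  simp only [om, Pi.add_apply]; ring
lemma om_add_right (x y z : Vec K) : om x (y + z) = om x y + om x z := by
  simp only [om, Pi.add_apply]; ring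
lemma om_sub_left (x y z : Vec K) : om (x - y) z = om x z - om y z := by
  simp only [om, Pi.sub_apply]; ring
lemma om_sub_right (x y z : Vec K) : om x (y - z) = om x y - om x z := by
  simp only [om, Pi.sub_apply]; ring
lemma om_smul_left (a : K) (x z : Vec K) : om (a • x) z = a * om x z := by
  simp only [om, Pi.smul_apply, smul_eq_mul]; ring
lemma om_smul_right (a : K) (x z : Vec K) : om x (a • z) = a * om x z := by
  simp only [om, Pi.smul_apply, smul_eq_mul]; ring
lemma om_self (x : Vec K) : om x x = 0 := by
  simp only [om]; ring
lemma om_swap (x y : Vec K) : om x y = - om y x := by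
  simp only [om]; ring

lemma om_eq (x y : Vec K) : om x y = x ⬝ᵥ (sympJ 2 K *ᵥ y) := by
  simp [om, sympJ, dotProduct, mulVec, Fin.sum_univ_two, Matrix.one_apply]
  ring

lemma symp_iff (M : Matrix (Fin 2 ⊕ Fin 2) (Fin 2 ⊕ Fin 2) K) :
    IsSymplectic M ↔ M ∈ symplecticGroup (Fin 2) K := by
  have : sympJ 2 K = - Matrix.J (Fin 2) K := by
    ext i j
    rcases i with i | i <;> rcases j with j | j <;> simp [sympJ, Matrix.J]
  rw [SymplecticGroup.mem_iff, IsSymplectic, this]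
  simp

lemma symp_iff' (M : Matrix (Fin 2 ⊕ Fin 2) (Fin 2 ⊕ Fin 2) K) :
    IsSymplectic M ↔ Mᵀ * sympJ 2 K * M = sympJ 2 K := by
  have : sympJ 2 K = - Matrix.J (Fin 2) K := by
    ext i j
    rcases i with i | i <;> rcases j with j | j <;> simp [sympJ, Matrix.J]
  rw [symp_iff, SymplecticGroup.mem_iff', this]
  simp

lemma symp_mul {M N : Matrix (Fin 2 ⊕ Fin 2) (Fin 2 ⊕ Fin 2) K}
    (h : IsSymplectic M) (h' : IsSymplectic N) : IsSymplectic (M * N) := by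
  rw [symp_iff] at *
  exact mul_mem h h'

lemma symp_det {M : Matrix (Fin 2 ⊕ Fin 2) (Fin 2 ⊕ Fin 2) K}
    (h : IsSymplectic M) : IsUnit M.det := by
  rw [symp_iff] at h
  exact SymplecticGroup.symplectic_det h

lemma symp_inv {M : Matrix (Fin 2 ⊕ Fin 2) (Fin 2 ⊕ Fin 2) K}
    (h : IsSymplectic M) : IsSymplectic M⁻¹ := by
  have hd := symp_det h
  rw [symp_iff'] at h ⊢
  have h1 : M * M⁻¹ = 1 := Matrix.mul_nonsing_inv _ hd
  have h2 : (M⁻¹)ᵀ * Mᵀ = 1 := by rw [← Matrix.transpose_mul, h1, Matrix.transpose_one]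
  calc (M⁻¹)ᵀ * sympJ 2 K * M⁻¹ = (M⁻¹)ᵀ * (Mᵀ * sympJ 2 K * M) * M⁻¹ := by rw [h]
    _ = ((M⁻¹)ᵀ * Mᵀ) * sympJ 2 K * (M * M⁻¹) := by simp only [Matrix.mul_assoc]
    _ = _ := by rw [h1, h2]; simp

lemma symp_om {M : Matrix (Fin 2 ⊕ Fin 2) (Fin 2 ⊕ Fin 2) K}
    (h : IsSymplectic M) (x y : Vec K) : om (M *ᵥ x) (M *ᵥ y) = om x y := by
  rw [symp_iff'] at h
  rw [om_eq, om_eq]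
  conv_rhs => rw [← h]
  rw [← Matrix.mulVec_mulVec, ← Matrix.mulVec_mulVec, Matrix.dotProduct_mulVec x,
    Matrix.vecMul_transpose]

lemma om_nondeg {x : Vec K} (h : ∀ y, om x y = 0) : x = 0 := by
  funext i
  rcases i with i | i <;> fin_cases i
  · simpa [om] using h (Pi.single (Sum.inr 0) 1)
  · simpa [om] using h (Pi.single (Sum.inr 1) 1)
  · simpa [om] using h (Pi.single (Sum.inl 0) 1)
  · simpa [om] using h (Pi.single (Sum.inl 1) 1)

/-- matrix with given columns -/
def colMat (e₁ e₂ f₁ f₂ : Vec K) : Matrix (Fin 2 ⊕ Fin 2) (Fin 2 ⊕ Fin 2) K :=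
  Matrix.of fun i j => Sum.elim ![e₁ i, e₂ i] ![f₁ i, f₂ i] j

structure SB (e₁ e₂ f₁ f₂ : Vec K) : Prop where
  ee : om e₁ e₂ = 0
  ff : om f₁ f₂ = 0
  e11 : om e₁ f₁ = 1
  e12 : om e₁ f₂ = 0
  e21 : om e₂ f₁ = 0
  e22 : om e₂ f₂ = 1

lemma SB.symp {e₁ e₂ f₁ f₂ : Vec K} (h : SB e₁ e₂ f₁ f₂) :
    IsSymplectic (colMat e₁ e₂ f₁ f₂) := by
  obtain ⟨h1, h2, h3, h4, h5, h6⟩ := h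
  rw [symp_iff']
  simp only [om] at *
  ext i j
  rcases i with i | i <;> rcases j with j | j <;> fin_cases i <;> fin_cases j <;>
    simp [sympJ, colMat, Matrix.mul_apply, Fin.sum_univ_two, Matrix.one_apply] <;> 
    first | linear_combination h1 | linear_combination -h1 | linear_combination h2 | linear_combination -h2 | linear_combination h3 | linear_combination -h3 | linear_combination h4 | linear_combination -h4 | linear_combination h5 | linear_combination -h5 | linear_combination h6 | linear_combination -h6 | ring

/-- expansion in a symplectic basis -/
lemma SB.expand {e₁ e₂ f₁ f₂ : Vec K} (h : SB e₁ e₂ f₁ f₂) (x : Vec K) :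
    x = om x f₁ • e₁ + om x f₂ • e₂ + om e₁ x • f₁ + om e₂ x • f₂ := by
  have hs := h.symp
  unfold IsSymplectic at hs
  have key : ∀ i j, (colMat e₁ e₂ f₁ f₂ * sympJ 2 K * (colMat e₁ e₂ f₁ f₂)ᵀ) i j
      = sympJ 2 K i j := fun i j => by rw [hs]
  funext i
  have k1 := key i (Sum.inl 0)
  have k2 := key i (Sum.inl 1)
  have k3 := key i (Sum.inr 0)
  have k4 := key i (Sum.inr 1)
  clear key hs
  rcases i with i | i <;> fin_cases i <;>
    simp [om, sympJ, colMat, Matrix.mul_apply, Fin.sum_univ_two, Matrix.one_apply]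
      at k1 k2 k3 k4 ⊢ <;>
    linear_combination x (Sum.inr 0) * k1 + x (Sum.inr 1) * k2 - x (Sum.inl 0) * k3
      - x (Sum.inl 1) * k4

lemma om_expand {e₁ e₂ f₁ f₂ : Vec K} (h : SB e₁ e₂ f₁ f₂) (x y : Vec K) :
    om x y = om x f₁ * om e₁ y + om x f₂ * om e₂ y + om e₁ x * om f₁ y + om e₂ x * om f₂ y := by
  conv_lhs => rw [h.expand x]
  simp only [om_add_left, om_smul_left]

end basics
section normalform
variable {K : Type*} [Field K]

lemma basis_form {e₁ e₂ f₁ f₂ : Vec K} (h : SB e₁ e₂ f₁ f₂)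
    (R : Matrix (Fin 2 ⊕ Fin 2) (Fin 2 ⊕ Fin 2) K) :
    R * colMat e₁ e₂ f₁ f₂ = colMat e₁ e₂ f₁ f₂ * Matrix.fromBlocks
      !![om (R *ᵥ e₁) f₁, om (R *ᵥ e₂) f₁; om (R *ᵥ e₁) f₂, om (R *ᵥ e₂) f₂]
      !![om (R *ᵥ f₁) f₁, om (R *ᵥ f₂) f₁; om (R *ᵥ f₁) f₂, om (R *ᵥ f₂) f₂]
      !![om e₁ (R *ᵥ e₁), om e₁ (R *ᵥ e₂); om e₂ (R *ᵥ e₁), om e₂ (R *ᵥ e₂)]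
      !![om e₁ (R *ᵥ f₁), om e₁ (R *ᵥ f₂); om e₂ (R *ᵥ f₁), om e₂ (R *ᵥ f₂)] := by
  have c1 : ∀ i, (R * colMat e₁ e₂ f₁ f₂) i (Sum.inl 0) = (R *ᵥ e₁) i := fun i => by
    simp [Matrix.mul_apply, Matrix.mulVec, dotProduct, colMat]
  have c2 : ∀ i, (R * colMat e₁ e₂ f₁ f₂) i (Sum.inl 1) = (R *ᵥ e₂) i := fun i => by
    simp [Matrix.mul_apply, Matrix.mulVec, dotProduct, colMat]
  have c3 : ∀ i, (R * colMat e₁ e₂ f₁ f₂) i (Sum.inr 0) = (R *ᵥ f₁) i := fun i => by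
    simp [Matrix.mul_apply, Matrix.mulVec, dotProduct, colMat]
  have c4 : ∀ i, (R * colMat e₁ e₂ f₁ f₂) i (Sum.inr 1) = (R *ᵥ f₂) i := fun i => by
    simp [Matrix.mul_apply, Matrix.mulVec, dotProduct, colMat]
  ext i j
  rcases j with j | j <;> fin_cases j
  · refine (c1 i).trans ((congrFun (h.expand (R *ᵥ e₁)) i).trans ?_)
    simp [Matrix.mul_apply, colMat, Fin.sum_univ_two]; ring
  · refine (c2 i).trans ((congrFun (h.expand (R *ᵥ e₂)) i).trans ?_)
    simp [Matrix.mul_apply, colMat, Fin.sum_univ_two]; ring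
  · refine (c3 i).trans ((congrFun (h.expand (R *ᵥ f₁)) i).trans ?_)
    simp [Matrix.mul_apply, colMat, Fin.sum_univ_two]; ring
  · refine (c4 i).trans ((congrFun (h.expand (R *ᵥ f₂)) i).trans ?_)
    simp [Matrix.mul_apply, colMat, Fin.sum_univ_two]; ring

lemma lagr_extend {e₁ e₂ : Vec K} (h0 : om e₁ e₂ = 0)
    (hind : ∀ a b : K, a • e₁ + b • e₂ = 0 → a = 0 ∧ b = 0) :
    ∃ f₁ f₂, SB e₁ e₂ f₁ f₂ := by
  obtain ⟨g, hg⟩ : ∃ g, om e₁ g ≠ 0 := by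
    by_contra! hc
    have := om_nondeg hc
    have := hind 1 0 (by simp [this])
    simp at this
  obtain ⟨x, hx1, hx2⟩ : ∃ x, om e₁ x = 0 ∧ om e₂ x ≠ 0 := by
    by_contra! hc
    have h2 : (- om e₂ g) • e₁ + (om e₁ g) • e₂ = 0 := by
      apply om_nondeg
      intro y
      have := hc (om e₁ g • y - om e₁ y • g) (by
        simp only [om_sub_right, om_smul_right]; ring)
      simp only [om_sub_right, om_smul_right, om_add_left, om_smul_left] at this ⊢
      linear_combination this
    exact hg (hind _ _ h2).2
  set f₂ := (om e₂ x)⁻¹ • x with hf2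
  have a1 : om e₁ f₂ = 0 := by rw [hf2, om_smul_right, hx1, mul_zero]
  have a2 : om e₂ f₂ = 1 := by rw [hf2, om_smul_right]; exact inv_mul_cancel₀ hx2
  set f₀ := (om e₁ g)⁻¹ • g - ((om e₁ g)⁻¹ * om e₂ g) • f₂ with hf0
  have a3 : om e₁ f₀ = 1 := by
    rw [hf0, om_sub_right, om_smul_right, om_smul_right, a1, inv_mul_cancel₀ hg]; ring
  have a4 : om e₂ f₀ = 0 := by
    rw [hf0, om_sub_right, om_smul_right, om_smul_right, a2]; ring
  refine ⟨f₀ - om f₀ f₂ • e₂, f₂, ⟨h0, ?_, ?_, a1, ?_, a2⟩⟩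
  · simp only [om_sub_left, om_smul_left, a2]; ring
  · simp only [om_sub_right, om_smul_right, a3, h0]; ring
  · simp only [om_sub_right, om_smul_right, a4, om_self]; ring

/-- Normal form of strictly hyperbolic elements. -/
def Dg (t d : K) : Matrix (Fin 2 ⊕ Fin 2) (Fin 2 ⊕ Fin 2) K :=
  Matrix.fromBlocks !![0, -d; 1, t] 0 0 !![t / d, -1 / d; 1, 0]

lemma normal_form {R : Matrix (Fin 2 ⊕ Fin 2) (Fin 2 ⊕ Fin 2) K} (hR : IsSymplectic R)
    {t d : K} (hd0 : d ≠ 0) (hd1 : d ≠ 1) (hq : (1 + d) ^ 2 ≠ t ^ 2) (e : Vec K)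
    (he : R *ᵥ (R *ᵥ e) = t • (R *ᵥ e) - d • e)
    (hind : ∀ a b : K, a • e + b • (R *ᵥ e) = 0 → a = 0 ∧ b = 0) :
    ∃ S, IsSymplectic S ∧ R * S = S * Dg t d := by
  have hom := symp_om hR
  have h0 : om e (R *ᵥ e) = 0 := by
    have h1 := hom e (R *ᵥ e)
    rw [he, om_sub_right, om_smul_right, om_smul_right, om_self, om_swap _ e] at h1
    have : (d - 1) * om e (R *ᵥ e) = 0 := by linear_combination h1
    exact (mul_eq_zero.1 this).resolve_left (sub_ne_zero.2 hd1)
  obtain ⟨f₁, f₂, hf⟩ := lagr_extend h0 hind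
  obtain ⟨ee, ff, e11, e12, e21, e22⟩ := id hf
  generalize hE : R *ᵥ e = E at *
  have E1 : om E (R *ᵥ f₁) = 1 := by rw [← hE, hom, e11]
  have E2 : om E (R *ᵥ f₂) = 0 := by rw [← hE, hom, e12]
  have F1 : om e (R *ᵥ f₁) = t / d := by
    have := hom E f₁
    rw [he, om_sub_left, om_smul_left, om_smul_left, E1, e21] at this
    field_simp; linear_combination -this
  have F2 : om e (R *ᵥ f₂) = -1 / d := by
    have := hom E f₂
    rw [he, om_sub_left, om_smul_left, om_smul_left, E2, e22] at this
    field_simp; linear_combination -this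
  have rel := om_expand hf (R *ᵥ f₁) (R *ᵥ f₂)
  rw [hom, ff, F1, F2, E1, E2, om_swap _ f₁] at rel
  have e11' : om f₁ e = -1 := by rw [om_swap, e11]
  have e12' : om f₂ e = 0 := by rw [om_swap, e12, neg_zero]
  have e21' : om f₁ E = 0 := by rw [om_swap, e21, neg_zero]
  have e22' : om f₂ E = -1 := by rw [om_swap, e22]
  have ee' : om E e = 0 := by rw [om_swap, ee, neg_zero]
  generalize hb11 : om f₁ (R *ᵥ f₁) = b11 at *
  generalize hb12 : om f₁ (R *ᵥ f₂) = b12 at *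
  generalize hb21 : om f₂ (R *ᵥ f₁) = b21 at *
  generalize hb22 : om f₂ (R *ᵥ f₂) = b22 at *
  have hD : d * (1 - d) * ((1 + d) ^ 2 - t ^ 2) ≠ 0 :=
    mul_ne_zero (mul_ne_zero hd0 (sub_ne_zero.2 hd1.symm)) (sub_ne_zero.2 hq)
  obtain ⟨b, c, q1, q2⟩ : ∃ b c : K, (d + 1) * b + t * d * c = -(b11 + t * b12) ∧
      t * (1 - d) * b + d * (1 - d ^ 2) * c = - d * (b21 - d * b12) := by
    refine ⟨(-(b11 + t * b12) * (d * (1 - d ^ 2)) + d * (b21 - d * b12) * (t * d)) /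
      (d * (1 - d) * ((1 + d) ^ 2 - t ^ 2)), (-(d + 1) * d * (b21 - d * b12) +
        (b11 + t * b12) * t * (1 - d)) / (d * (1 - d) * ((1 + d) ^ 2 - t ^ 2)), ?_, ?_⟩
    · rw [mul_div_assoc', mul_div_assoc', ← add_div, div_eq_iff hD]; ring
    · rw [mul_div_assoc', mul_div_assoc', ← add_div, div_eq_iff hD]; ring
  have q3 : b22 = -(b11 + t * b12) / d := by field_simp at rel ⊢; linear_combination -rel
  obtain ⟨a, ha⟩ : ∃ a, a = d * (b12 + d * c) := ⟨_, rfl⟩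
  have hSB : SB e E (f₁ + a • e + b • E) (f₂ + b • e + c • E) := by
    constructor <;>
      simp only [om_add_left, om_add_right, om_smul_left, om_smul_right, om_self, ee, ff,
        e11, e12, e21, e22, e11', e12', e21', e22', ee'] <;> ring
  refine ⟨_, hSB.symp, ?_⟩
  have hb := basis_form hSB R
  rw [hb]
  congr 1
  rw [Dg, Matrix.fromBlocks_inj]
  simp only [Matrix.mulVec_add, Matrix.mulVec_smul, hE, he, om_add_left, om_add_right,
    om_smul_left, om_smul_right, om_sub_left, om_sub_right, om_self, ee, ff,
        e11, e12, e21, e22, e11', e12', e21', e22', ee', E1, E2, F1, F2, hb11, hb12, hb21, hb22,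
        om_swap (R *ᵥ f₁), om_swap (R *ᵥ f₂), om_swap (R *ᵥ f₁) f₁, om_swap (R *ᵥ f₁) f₂,
        om_swap (R *ᵥ f₂) f₁, om_swap (R *ᵥ f₂) f₂]
  refine ⟨?_, ?_, ?_, ?_⟩
  · ext i j; fin_cases i <;> fin_cases j <;> simp
  · ext i j; fin_cases i <;> fin_cases j <;> simp
    all_goals
      try rw [ha]
      try rw [q3]
      field_simp
      first | linear_combination q1 | linear_combination -q1 | linear_combination q2 | linear_combination -q2 | ring1
  · ext i j; fin_cases i <;> fin_cases j <;> simp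
  · ext i j; fin_cases i <;> fin_cases j <;> simp

end normalform
section poly
variable {K : Type*} [Field K]

lemma exists_cyc {P : Matrix (Fin 2 ⊕ Fin 2) (Fin 2 ⊕ Fin 2) K} {q q' : K[X]}
    (hq : q.natDegree = 2) (hq' : q'.natDegree = 2) (hm : minpoly K P = q * q') :
    ∃ e : Vec K, (aeval P q) *ᵥ e = 0 ∧
      ∀ a b : K, a • e + b • (P *ᵥ e) = 0 → a = 0 ∧ b = 0 := by
  have hq0 : q ≠ 0 := by rintro rfl; simp at hq
  have hq0' : q' ≠ 0 := by rintro rfl; simp at hq'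
  have hdeg : (minpoly K P).natDegree = 4 := by
    rw [hm, natDegree_mul hq0 hq0', hq, hq']
  have hsmall : ∀ p : K[X], p ≠ 0 → p.natDegree < 4 → aeval P p ≠ 0 := by
    intro p hp hpd h
    have := natDegree_le_natDegree (minpoly.degree_le_of_ne_zero K P hp h)
    omega
  have hz : aeval P q * aeval P q' = 0 := by
    rw [← map_mul, ← hm, minpoly.aeval]
  have hker : ∀ z, (aeval P q) *ᵥ ((aeval P q') *ᵥ z) = 0 := by
    intro z; rw [Matrix.mulVec_mulVec, hz, Matrix.zero_mulVec]
  by_contra! hcon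
  -- every vector in the range is an eigenvector
  have heig : ∀ z, ∃ l : K, P *ᵥ ((aeval P q') *ᵥ z) = l • ((aeval P q') *ᵥ z) := by
    intro z
    obtain ⟨a, b, hab, hne⟩ := hcon _ (hker z)
    generalize (aeval P q') *ᵥ z = e at *
    by_cases hb : b = 0
    · have ha : a ≠ 0 := fun ha => hne ha hb
      subst hb
      have : e = 0 := by simpa [ha] using hab
      exact ⟨0, by simp [this]⟩
    · refine ⟨-(b⁻¹ * a), ?_⟩
      have : P *ᵥ e = b⁻¹ • (b • (P *ᵥ e)) := by rw [smul_smul, inv_mul_cancel₀ hb, one_smul]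
      rw [this, eq_neg_of_add_eq_zero_right hab, smul_neg, smul_smul, neg_smul]
  obtain ⟨z₁, hz₁⟩ : ∃ z, (aeval P q') *ᵥ z ≠ 0 := by
    by_contra! h
    refine hsmall q' hq0' (by omega) ?_
    exact Matrix.ext_of_mulVec_single fun i => by rw [h, Matrix.zero_mulVec]
  obtain ⟨a, ha⟩ := heig z₁
  have hall : ∀ z, P *ᵥ ((aeval P q') *ᵥ z) = a • ((aeval P q') *ᵥ z) := by
    intro z
    obtain ⟨l, hl⟩ := heig z
    obtain ⟨m, hm⟩ := heig (z + z₁)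
    rw [Matrix.mulVec_add, Matrix.mulVec_add, hl, ha] at hm
    generalize (aeval P q') *ᵥ z = e at *
    generalize (aeval P q') *ᵥ z₁ = e₁ at *
    have h1 : (l - m) • e = (m - a) • e₁ := by
      rw [sub_smul, sub_smul, sub_eq_sub_iff_add_eq_add, hm, smul_add]; abel
    by_cases hlm : l = m
    · subst hlm
      rw [sub_self, zero_smul] at h1
      have := (smul_eq_zero.1 h1.symm).resolve_right hz₁
      rw [hl, sub_eq_zero.1 this]
    · have : e = ((l - m)⁻¹ * (m - a)) • e₁ := by
        rw [mul_smul, ← h1, smul_smul, inv_mul_cancel₀ (sub_ne_zero.2 hlm), one_smul]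
      rw [this, Matrix.mulVec_smul, ha, smul_comm]
  refine hsmall ((X - C a) * q') (mul_ne_zero (X_sub_C_ne_zero a) hq0') ?_ ?_
  · rw [natDegree_mul (X_sub_C_ne_zero a) hq0', natDegree_X_sub_C, hq']; norm_num
  · refine Matrix.ext_of_mulVec_single fun i => ?_
    rw [map_mul, ← Matrix.mulVec_mulVec, map_sub, aeval_X, aeval_C, Matrix.sub_mulVec, hall,
      Algebra.algebraMap_eq_smul_one, Matrix.smul_mulVec, Matrix.one_mulVec, sub_self, Matrix.zero_mulVec]

lemma quad_ker {P : Matrix (Fin 2 ⊕ Fin 2) (Fin 2 ⊕ Fin 2) K} {t d : K} {e : Vec K}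
    (h : (aeval P (X ^ 2 - C t * X + C d)) *ᵥ e = 0) :
    P *ᵥ (P *ᵥ e) = t • (P *ᵥ e) - d • e := by
  simp only [map_add, map_sub, map_mul, map_pow, aeval_X, aeval_C,
      Algebra.algebraMap_eq_smul_one, Matrix.add_mulVec, Matrix.sub_mulVec, Matrix.smul_mulVec,
      Matrix.one_mulVec, smul_mul_assoc, one_mul, pow_two, ← Matrix.mulVec_mulVec] at h
  have : P *ᵥ (P *ᵥ e) = (P *ᵥ (P *ᵥ e) - t • (P *ᵥ e) + d • e) + (t • (P *ᵥ e) - d • e) := by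
    abel
  rw [this, h, zero_add]

lemma quad_deg (t d : K) : (X ^ 2 - C t * X + C d : K[X]).natDegree = 2 := by
  compute_degree!

lemma quad_form {q : K[X]} (hm : q.Monic) (hd : q.natDegree = 2) :
    q = X ^ 2 - C (- q.coeff 1) * X + C (q.coeff 0) := by
  have h2 : q.coeff 2 = 1 := by rw [← hd]; exact hm
  conv_lhs => rw [q.as_sum_range_C_mul_X_pow, hd]
  simp [Finset.sum_range_succ, h2]
  ring

lemma quad_reverse (t d : K) (hd : d ≠ 0) : recipPoly (X ^ 2 - C t * X + C d : K[X])
    = X ^ 2 - C (t / d) * X + C (1 / d) := by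
  have h1 : (X ^ 2 - C t * X + C d : K[X]).reverse = C d * X ^ 2 - C t * X + 1 := by
    ext n
    rw [coeff_reverse, quad_deg]
    rcases n with _ | _ | _ | n
    · rw [revAt_le (by norm_num)]; simp [coeff_X, coeff_C, coeff_one]
    · rw [revAt_le (by norm_num)]; simp [coeff_X, coeff_C, coeff_one, coeff_X_pow]
    · rw [revAt_le (by norm_num)]; simp [coeff_X, coeff_C, coeff_one]
    · rw [revAt_eq_self_of_lt (by omega)]; simp [coeff_X, coeff_C, coeff_one, coeff_X_pow]
  rw [recipPoly, h1]
  have h2 : (X ^ 2 - C t * X + C d : K[X]).coeff 0 = d := by simp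
  rw [h2]
  have h3 : (C d⁻¹ : K[X]) * C d = 1 := by rw [← C_mul, inv_mul_cancel₀ hd, C_1]
  rw [div_eq_mul_inv, div_eq_mul_inv, one_mul, C_mul]
  linear_combination X ^ 2 * h3

lemma hyp_data {P : Matrix (Fin 2 ⊕ Fin 2) (Fin 2 ⊕ Fin 2) K}
    (h : IsStrictlyHyperbolic P) : ∃ t d : K, d ≠ 0 ∧ d ≠ 1 ∧ (1 + d) ^ 2 ≠ t ^ 2 ∧
      (∃ e : Vec K, P *ᵥ (P *ᵥ e) = t • (P *ᵥ e) - d • e ∧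
        ∀ a b : K, a • e + b • (P *ᵥ e) = 0 → a = 0 ∧ b = 0) ∧
      (∃ e : Vec K, P *ᵥ (P *ᵥ e) = (t / d) • (P *ᵥ e) - (1 / d) • e ∧
        ∀ a b : K, a • e + b • (P *ᵥ e) = 0 → a = 0 ∧ b = 0) := by
  obtain ⟨q, hmon, hdeg, h0, hcop, hmin⟩ := h
  have hqf := quad_form hmon hdeg
  generalize -q.coeff 1 = t at hqf
  generalize q.coeff 0 = d at hqf h0
  subst hqf
  rw [quad_reverse t d h0] at hcop hmin
  refine ⟨t, d, h0, ?_, ?_, ?_, ?_⟩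
  · rintro rfl
    simp only [div_one] at hcop
    have := natDegree_eq_zero_of_isUnit (isCoprime_self.1 hcop)
    rw [quad_deg] at this
    omega
  · intro h
    have hev : ∀ x : K, x ^ 2 - t * x + d = 0 → x ^ 2 - t / d * x + 1 / d = 0 → False := by
      intro x h1 h2
      obtain ⟨a, b, hab⟩ := hcop
      have := congrArg (eval x) hab
      simp only [eval_add, eval_mul, eval_sub, eval_pow, eval_X, eval_C, h1, h2, eval_one] at this
      simp at this
    have h' : (1 + d - t) * (1 + d + t) = 0 := by linear_combination h
    rcases mul_eq_zero.1 h' with h1 | h1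
    · exact hev 1 (by linear_combination h1) (by field_simp; linear_combination h1)
    · exact hev (-1) (by linear_combination h1) (by field_simp; linear_combination h1)
  · obtain ⟨e, he, hi⟩ := exists_cyc (quad_deg _ _) (quad_deg _ _) hmin
    exact ⟨e, quad_ker he, hi⟩
  · rw [mul_comm] at hmin
    obtain ⟨e, he, hi⟩ := exists_cyc (quad_deg _ _) (quad_deg _ _) hmin
    exact ⟨e, quad_ker he, hi⟩

end poly
section core
variable {K : Type*} [Field K]

lemma conj_eq {P S D : Matrix (Fin 2 ⊕ Fin 2) (Fin 2 ⊕ Fin 2) K} (hS : IsSymplectic S)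
    (h : P * S = S * D) : P = S * D * S⁻¹ := by
  rw [← h, Matrix.mul_nonsing_inv_cancel_right _ _ (symp_det hS)]

lemma conj_of {P S N T D : Matrix (Fin 2 ⊕ Fin 2) (Fin 2 ⊕ Fin 2) K} (hS : IsSymplectic S)
    (hT : IsSymplectic T) (h : P * S = S * D) (h' : N * T = T * D) :
    ∃ U, IsSymplectic U ∧ N = U * P * U⁻¹ := by
  refine ⟨T * S⁻¹, symp_mul hT (symp_inv hS), ?_⟩
  have hd := symp_det hS
  rw [conj_eq hT h', conj_eq hS h, Matrix.mul_inv_rev, Matrix.nonsing_inv_nonsing_inv _ hd]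
  simp only [Matrix.mul_assoc, Matrix.nonsing_inv_mul_cancel_left _ _ hd]

/-- The compression of `M` to some Lagrangian is a product of two suitable 2×2 matrices. -/
def Good (t₁ d₁ t₂ d₂ : K) (M : Matrix (Fin 2 ⊕ Fin 2) (Fin 2 ⊕ Fin 2) K) : Prop :=
  ∃ e₁ e₂ f₁ f₂ : Vec K, SB e₁ e₂ f₁ f₂ ∧ ∃ x₁ x₂ x₃ x₄ y₁ y₂ y₃ y₄ : K,
    x₃ ≠ 0 ∧ y₃ ≠ 0 ∧ x₁ + x₄ = t₁ ∧ x₁ * x₄ - x₂ * x₃ = d₁ ∧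
    y₁ + y₄ = t₂ ∧ y₁ * y₄ - y₂ * y₃ = d₂ ∧
    om (M *ᵥ e₁) f₁ = x₁ * y₁ + x₂ * y₃ ∧ om (M *ᵥ e₂) f₁ = x₁ * y₂ + x₂ * y₄ ∧
    om (M *ᵥ e₁) f₂ = x₃ * y₁ + x₄ * y₃ ∧ om (M *ᵥ e₂) f₂ = x₃ * y₂ + x₄ * y₄

lemma factor {A B C D X Y Xi Yi : Matrix (Fin 2) (Fin 2) K}
    (hN : IsSymplectic (Matrix.fromBlocks A B C D)) (hA : A = X * Y)
    (hX : X * Xi = 1) (hY : Y * Yi = 1) :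
    IsSymplectic (Matrix.fromBlocks X 0 (C * Yi) Xiᵀ) ∧
    IsSymplectic (Matrix.fromBlocks Y (Xi * B) 0 Yiᵀ) ∧
    Matrix.fromBlocks A B C D =
      Matrix.fromBlocks X 0 (C * Yi) Xiᵀ * Matrix.fromBlocks Y (Xi * B) 0 Yiᵀ := by
  have hX' : Xi * X = 1 := mul_eq_one_comm.1 hX
  have hY' : Yi * Y = 1 := mul_eq_one_comm.1 hY
  have hXt : Xᵀ * Xiᵀ = 1 := by rw [← Matrix.transpose_mul, hX', Matrix.transpose_one]
  have hXt' : Xiᵀ * Xᵀ = 1 := mul_eq_one_comm.1 hXt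
  have hYt : Yᵀ * Yiᵀ = 1 := by rw [← Matrix.transpose_mul, hY', Matrix.transpose_one]
  have hYt' : Yiᵀ * Yᵀ = 1 := mul_eq_one_comm.1 hYt
  have hN' := (symp_iff _).1 hN
  have hNt := SymplecticGroup.transpose_mem hN'
  rw [Matrix.fromBlocks_transpose, SymplecticGroup.fromBlocks_mem_iff] at hNt
  rw [SymplecticGroup.fromBlocks_mem_iff] at hN'
  obtain ⟨n1, n2, n3⟩ := hN'
  obtain ⟨r1, r2, r3⟩ := hNt
  simp only [Matrix.transpose_transpose] at r1 r2 r3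
  have h2 : IsSymplectic (Matrix.fromBlocks Y (Xi * B) 0 Yiᵀ) := by
    rw [symp_iff, SymplecticGroup.fromBlocks_mem_iff]
    refine ⟨by simp, ?_, ?_⟩
    · rw [Matrix.transpose_mul, Matrix.transpose_transpose]
      have : A * (Bᵀ * Xiᵀ * Yiᵀ) = A * (Yi * (Xi * B)) := by
        calc A * (Bᵀ * Xiᵀ * Yiᵀ) = (A * Bᵀ) * (Xiᵀ * Yiᵀ) := by simp only [Matrix.mul_assoc]
          _ = B * ((Yᵀ * (Xᵀ * Xiᵀ)) * Yiᵀ) := by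
            rw [r1, hA, Matrix.transpose_mul]; simp only [Matrix.mul_assoc]
          _ = B := by rw [hXt, Matrix.mul_one, hYt, Matrix.mul_one]
          _ = (X * (Y * Yi) * Xi) * B := by rw [hY, Matrix.mul_one, hX, Matrix.one_mul]
          _ = A * (Yi * (Xi * B)) := by rw [hA]; simp only [Matrix.mul_assoc]
      have h3 := congrArg (fun Z => Yi * (Xi * Z)) this
      have h4 : ∀ Z, Yi * (Xi * (A * Z)) = Z := fun Z => by
        calc Yi * (Xi * (A * Z)) = Yi * ((Xi * X) * Y) * Z := by
              rw [hA]; simp only [Matrix.mul_assoc]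
          _ = Z := by rw [hX', Matrix.one_mul, hY', Matrix.one_mul]
      simpa only [h4] using h3
    · simp [hYt]
  have hprod : Matrix.fromBlocks A B C D =
      Matrix.fromBlocks X 0 (C * Yi) Xiᵀ * Matrix.fromBlocks Y (Xi * B) 0 Yiᵀ := by
    rw [Matrix.fromBlocks_multiply, Matrix.fromBlocks_inj]
    refine ⟨by simp [hA], ?_, ?_, ?_⟩
    · rw [Matrix.zero_mul, add_zero, ← Matrix.mul_assoc, hX, Matrix.one_mul]
    · rw [Matrix.mul_zero, add_zero, Matrix.mul_assoc, hY', Matrix.mul_one]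
    · have h4 : ∀ Z, Xiᵀ * (Yiᵀ * (Aᵀ * Z)) = Z := fun Z => by
        calc Xiᵀ * (Yiᵀ * (Aᵀ * Z)) = Xiᵀ * ((Yiᵀ * Yᵀ) * Xᵀ) * Z := by
              rw [hA, Matrix.transpose_mul]; simp only [Matrix.mul_assoc]
          _ = Z := by rw [hYt', Matrix.one_mul, hXt', Matrix.one_mul]
      have e1 : Aᵀ * D = 1 + Cᵀ * B := by rw [← n3]; abel
      have e2 : Aᵀ * (C * Yi * (Xi * B) + Xiᵀ * Yiᵀ) = 1 + Cᵀ * B := by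
        calc Aᵀ * (C * Yi * (Xi * B) + Xiᵀ * Yiᵀ)
            = (Aᵀ * C) * (Yi * (Xi * B)) + Aᵀ * (Xiᵀ * Yiᵀ) := by
              rw [Matrix.mul_add]; simp only [Matrix.mul_assoc]
          _ = Cᵀ * ((X * (Y * Yi)) * Xi * B) + (Yᵀ * (Xᵀ * Xiᵀ)) * Yiᵀ := by
              rw [n1, hA, Matrix.transpose_mul]; simp only [Matrix.mul_assoc]
          _ = 1 + Cᵀ * B := by
              rw [hY, Matrix.mul_one, hX, Matrix.one_mul, hXt, Matrix.mul_one, hYt, add_comm]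
      rw [← h4 D, e1, ← e2, h4]
  refine ⟨?_, h2, hprod⟩
  have : Matrix.fromBlocks X 0 (C * Yi) Xiᵀ =
      Matrix.fromBlocks A B C D * (Matrix.fromBlocks Y (Xi * B) 0 Yiᵀ)⁻¹ := by
    rw [hprod, Matrix.mul_nonsing_inv_cancel_right _ _ (symp_det h2)]
  rw [this]
  exact symp_mul hN (symp_inv h2)

lemma good_done {t₁ d₁ t₂ d₂ : K} (hd1 : d₁ ≠ 0) (hd1' : d₁ ≠ 1) (hq1 : (1 + d₁) ^ 2 ≠ t₁ ^ 2)
    (hd2 : d₂ ≠ 0) (hd2' : d₂ ≠ 1) (hq2 : (1 + d₂) ^ 2 ≠ t₂ ^ 2)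
    {M P₁ P₂ S₁ S₂ : Matrix (Fin 2 ⊕ Fin 2) (Fin 2 ⊕ Fin 2) K}
    (hM : IsSymplectic M) (hS₁ : IsSymplectic S₁) (hS₂ : IsSymplectic S₂)
    (h₁ : P₁ * S₁ = S₁ * Dg (t₁ / d₁) (1 / d₁)) (h₂ : P₂ * S₂ = S₂ * Dg t₂ d₂)
    (hG : Good t₁ d₁ t₂ d₂ M) :
    ∃ S₁ S₂ : Matrix (Fin 2 ⊕ Fin 2) (Fin 2 ⊕ Fin 2) K,
      IsSymplectic S₁ ∧ IsSymplectic S₂ ∧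
      M = (S₁ * P₁ * S₁⁻¹) * (S₂ * P₂ * S₂⁻¹) := by
  obtain ⟨e₁, e₂, f₁, f₂, hSB, x₁, x₂, x₃, x₄, y₁, y₂, y₃, y₄, hx, hy, tx, dx, ty, dy,
    a1, a2, a3, a4⟩ := hG
  have hb := basis_form hSB M
  have hS := hSB.symp
  generalize colMat e₁ e₂ f₁ f₂ = S at hb hS
  rw [a1, a2, a3, a4] at hb
  generalize !![om (M *ᵥ f₁) f₁, om (M *ᵥ f₂) f₁; om (M *ᵥ f₁) f₂, om (M *ᵥ f₂) f₂] = B at hb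
  generalize !![om e₁ (M *ᵥ e₁), om e₁ (M *ᵥ e₂); om e₂ (M *ᵥ e₁), om e₂ (M *ᵥ e₂)] = C at hb
  generalize !![om e₁ (M *ᵥ f₁), om e₁ (M *ᵥ f₂); om e₂ (M *ᵥ f₁), om e₂ (M *ᵥ f₂)] = D at hb
  obtain ⟨N, hN⟩ : ∃ N, N = Matrix.fromBlocks !![x₁ * y₁ + x₂ * y₃, x₁ * y₂ + x₂ * y₄;
    x₃ * y₁ + x₄ * y₃, x₃ * y₂ + x₄ * y₄] B C D := ⟨_, rfl⟩
  rw [← hN] at hb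
  have hNs : IsSymplectic N := by
    have : N = S⁻¹ * (M * S) := by
      rw [hb, Matrix.nonsing_inv_mul_cancel_left _ _ (symp_det hS)]
    rw [this]
    exact symp_mul (symp_inv hS) (symp_mul hM hS)
  rw [hN] at hNs
  have hX : !![x₁, x₂; x₃, x₄] * !![x₄ / d₁, -x₂ / d₁; -x₃ / d₁, x₁ / d₁] = 1 := by
    ext i j
    fin_cases i <;> fin_cases j <;> simp [Matrix.mul_apply, Fin.sum_univ_two] <;> field_simp <;>
      first | ring1 | linear_combination dx | linear_combination -dx
  have hY : !![y₁, y₂; y₃, y₄] * !![y₄ / d₂, -y₂ / d₂; -y₃ / d₂, y₁ / d₂] = 1 := by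
    ext i j
    fin_cases i <;> fin_cases j <;> simp [Matrix.mul_apply, Fin.sum_univ_two] <;> field_simp <;>
      first | ring1 | linear_combination dy | linear_combination -dy
  obtain ⟨s1, s2, hp⟩ := factor hNs (X := !![x₁, x₂; x₃, x₄]) (Y := !![y₁, y₂; y₃, y₄])
    (by simp [Matrix.mul_fin_two]) hX hY
  rw [← hN] at hp
  obtain ⟨T₁, hT1, hT1'⟩ := normal_form s1 (t := t₁ / d₁) (d := 1 / d₁) (by simpa using hd1)
    (by rw [Ne, div_eq_one_iff_eq hd1]; exact hd1'.symm)
    (by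
      intro h; apply hq1; field_simp at h; linear_combination h)
    (Sum.elim 0 ![0, 1])
    (by
      simp only [Matrix.fromBlocks_mulVec]
      funext i
      rcases i with i | i <;> fin_cases i <;>
        simp [Matrix.mulVec, dotProduct, Fin.sum_univ_two] <;> field_simp <;>
        subst tx <;> first | ring1 | linear_combination dx | linear_combination -dx | skip)
    (by
      intro a b h
      have h1 := congrFun h (Sum.inr 0)
      have h2 := congrFun h (Sum.inr 1)
      simp [Matrix.fromBlocks_mulVec, Matrix.mulVec, dotProduct, Fin.sum_univ_two, hx, hd1]
        at h1 h2
      subst h1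
      simpa using h2)
  obtain ⟨T₂, hT2, hT2'⟩ := normal_form s2 (t := t₂) (d := d₂) hd2 hd2' hq2
    (Sum.elim ![1, 0] 0)
    (by
      simp only [Matrix.fromBlocks_mulVec]
      funext i
      rcases i with i | i <;> fin_cases i <;>
        simp [Matrix.mulVec, dotProduct, Fin.sum_univ_two] <;>
        subst ty <;> first | ring1 | linear_combination dy | linear_combination -dy | skip)
    (by
      intro a b h
      have h1 := congrFun h (Sum.inl 0)
      have h2 := congrFun h (Sum.inl 1)
      simp [Matrix.fromBlocks_mulVec, Matrix.mulVec, dotProduct, Fin.sum_univ_two, hy]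
        at h1 h2
      subst h2
      simpa using h1)
  obtain ⟨U₁, hU1, hU1'⟩ := conj_of hS₁ hT1 h₁ hT1'
  obtain ⟨U₂, hU2, hU2'⟩ := conj_of hS₂ hT2 h₂ hT2'
  refine ⟨S * U₁, S * U₂, symp_mul hS hU1, symp_mul hS hU2, ?_⟩
  rw [conj_eq hS hb, hp, hU1', hU2', Matrix.mul_inv_rev, Matrix.mul_inv_rev]
  simp only [Matrix.mul_assoc, Matrix.nonsing_inv_mul_cancel_left _ _ (symp_det hS)]

end core
section pairs
variable {K : Type*} [Field K]

lemma scalars {t₁ d₁ t₂ d₂ c₁ c₂ c₃ : K} (hd1 : d₁ ≠ 0) (hd1' : d₁ ≠ 1)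
    (hq1 : (1 + d₁) ^ 2 ≠ t₁ ^ 2) (hd2 : d₂ ≠ 0) (hd2' : d₂ ≠ 1)
    (hq2 : (1 + d₂) ^ 2 ≠ t₂ ^ 2) (h3 : c₃ ≠ 0) :
    ∃ x₁ x₂ x₃ x₄ y₁ y₂ y₃ y₄ : K,
    x₃ ≠ 0 ∧ y₃ ≠ 0 ∧ x₁ + x₄ = t₁ ∧ x₁ * x₄ - x₂ * x₃ = d₁ ∧
    y₁ + y₄ = t₂ ∧ y₁ * y₄ - y₂ * y₃ = d₂ ∧
    c₁ * (x₁ * y₂ + x₂ * y₄) - c₂ * (x₁ * y₁ + x₂ * y₃) = c₃ * (x₃ * y₁ + x₄ * y₃) := by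
  by_cases H : ∃ s : K, s ≠ 0 ∧ c₃ * s ^ 2 - c₁ * d₁ ≠ 0
  · obtain ⟨s, hs, hs'⟩ := H
    obtain ⟨y, hy⟩ : ∃ y, y * (c₃ * s ^ 2 - c₁ * d₁) = -c₁ * d₁ * t₂ - (c₃ * t₁ * s - c₂ * d₁) :=
      ⟨_, div_mul_cancel₀ _ hs'⟩
    refine ⟨0, -d₁ / s, s, t₁, y, y * (t₂ - y) - d₂, 1, t₂ - y, hs, one_ne_zero, by ring,
      by field_simp; ring, by ring, by ring, ?_⟩
    field_simp
    linear_combination -hy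
  · push Not at H
    have e1 := H 1 one_ne_zero
    have e2 := H d₁ hd1
    have e3 := H d₂ hd2
    have hd : ∀ d : K, d ≠ 1 → c₃ * d ^ 2 - c₁ * d₁ = 0 → d = -1 := by
      intro d hd h
      have : c₃ * ((d - 1) * (d + 1)) = 0 := by linear_combination h - e1
      rcases mul_eq_zero.1 ((mul_eq_zero.1 this).resolve_left h3) with h | h
      · exact absurd (sub_eq_zero.1 h) hd
      · exact eq_neg_of_add_eq_zero_left h
    have f1 := hd d₁ hd1' e2
    have f2 := hd d₂ hd2' e3
    subst f1 f2
    have two : (2 : K) ≠ 0 := by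
      intro h; apply hd1'; linear_combination -h
    have ht1 : t₁ ≠ 0 := by rintro rfl; simp at hq1
    have ht2 : t₂ ≠ 0 := by rintro rfl; simp at hq2
    obtain ⟨s, hs, hs2, hs'⟩ : ∃ s : K, s ≠ 0 ∧ s ^ 2 = 1 ∧ c₃ * t₁ * s + c₂ ≠ 0 := by
      by_cases h : c₃ * t₁ * 1 + c₂ = 0
      · refine ⟨-1, by simp, by ring, fun h' => ?_⟩
        have : 2 * (c₃ * t₁) = 0 := by linear_combination h - h'
        simp [two, h3, ht1] at this
      · exact ⟨1, one_ne_zero, by ring, h⟩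
    refine ⟨0, 1 / s, s, t₁, 0, (c₃ * t₁ * s + c₂) / (- c₃ * t₂), - c₃ * t₂ / (c₃ * t₁ * s + c₂),
      t₂, hs, by simp [h3, ht2, hs'], by ring, by field_simp; ring, by ring, ?_, ?_⟩
    · field_simp; ring
    · have : s = 1 / s := by field_simp; exact hs2
      field_simp
      linear_combination e1 * (c₃ * t₂ ^ 2 * (c₂ + c₃ * t₁ * s))

lemma good_pair {t₁ d₁ t₂ d₂ : K} (hd1 : d₁ ≠ 0) (hd1' : d₁ ≠ 1)
    (hq1 : (1 + d₁) ^ 2 ≠ t₁ ^ 2) (hd2 : d₂ ≠ 0) (hd2' : d₂ ≠ 1)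
    (hq2 : (1 + d₂) ^ 2 ≠ t₂ ^ 2) {M : Matrix (Fin 2 ⊕ Fin 2) (Fin 2 ⊕ Fin 2) K}
    (hM : IsSymplectic M) {v w : Vec K} (h1 : om v w = 0) (h2 : om (M *ᵥ v) w = 0)
    (hm : om (M *ᵥ v) v ≠ 0) (hn : om (M *ᵥ w) w ≠ 0) : Good t₁ d₁ t₂ d₂ M := by
  obtain ⟨x₁, x₂, x₃, x₄, y₁, y₂, y₃, y₄, hx, hy, tx, dx, ty, dy, E⟩ :=
    scalars (c₁ := om (M *ᵥ v) v) (c₂ := om (M *ᵥ w) v) hd1 hd1' hq1 hd2 hd2' hq2 hn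
  have k1 : om v (M *ᵥ v) = - om (M *ᵥ v) v := om_swap _ _
  have k2 : om w (M *ᵥ v) = 0 := by rw [om_swap, h2, neg_zero]
  have k3 : om v (M *ᵥ w) = - om (M *ᵥ w) v := om_swap _ _
  have k4 : om w (M *ᵥ w) = - om (M *ᵥ w) w := om_swap _ _
  have k5 : om w v = 0 := by rw [om_swap, h1, neg_zero]
  have k6 : om (M *ᵥ v) (M *ᵥ w) = 0 := by rw [symp_om hM, h1]
  have k7 : om (M *ᵥ w) (M *ᵥ v) = 0 := by rw [symp_om hM, k5]
  generalize hmm : om (M *ᵥ v) v = m at *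
  generalize hnn : om (M *ᵥ w) w = n at *
  generalize hrr : om (M *ᵥ w) v = r at *
  obtain ⟨A11, hA11⟩ : ∃ A, x₁ * y₁ + x₂ * y₃ = A := ⟨_, rfl⟩
  obtain ⟨A12, hA12⟩ : ∃ A, x₁ * y₂ + x₂ * y₄ = A := ⟨_, rfl⟩
  obtain ⟨A21, hA21⟩ : ∃ A, x₃ * y₁ + x₄ * y₃ = A := ⟨_, rfl⟩
  obtain ⟨A22, hA22⟩ : ∃ A, x₃ * y₂ + x₄ * y₄ = A := ⟨_, rfl⟩
  rw [hA11, hA12, hA21] at E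
  refine ⟨v, w, (-1 / m) • (M *ᵥ v) + (A11 / m) • v + (A21 / m) • w,
    (r / (n * m)) • (M *ᵥ v) - (1 / n) • (M *ᵥ w) + (A21 / m) • v
      + ((A22 - A21 / m * r) / n) • w, ?_, x₁, x₂, x₃, x₄, y₁, y₂, y₃, y₄, hx, hy, tx, dx, ty, dy,
    ?_, ?_, ?_, ?_⟩
  · constructor
    all_goals
      simp only [om_add_left, om_add_right, om_sub_left, om_sub_right, om_smul_left,
        om_smul_right, om_self, k1, k2, k3, k4, k5, k6, k7, h1, h2, hmm, hnn, hrr, hA11, hA12, hA21, hA22]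
    all_goals try (field_simp)
    all_goals first | ring1 | linear_combination E | linear_combination -E | skip
  all_goals
    simp only [om_add_left, om_add_right, om_sub_left, om_sub_right, om_smul_left,
        om_smul_right, om_self, k1, k2, k3, k4, k5, k6, k7, h1, h2, hmm, hnn, hrr, hA11, hA12, hA21, hA22]
  all_goals try (field_simp)
  all_goals first | ring1 | linear_combination E | linear_combination -E | skip

/-- c times a transvection -/
lemma good_trans {t₁ d₁ t₂ d₂ : K} (hd1 : d₁ ≠ 0) 
    {M : Matrix (Fin 2 ⊕ Fin 2) (Fin 2 ⊕ Fin 2) K}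
    {e₁ e₂ f₁ f₂ : Vec K} (h : SB e₁ e₂ f₁ f₂) {c κ : K} (hc : c ^ 2 = 1) (hκ : κ ≠ 0)
    (h1 : M *ᵥ e₁ = c • e₁) (h2 : M *ᵥ e₂ = c • e₂ + κ • f₂) : Good t₁ d₁ t₂ d₂ M := by
  have hc0 : c ≠ 0 := by rintro rfl; simp at hc
  obtain ⟨g1, g2, g3, g4, g5, g6⟩ := h
  have g1' : om e₂ e₁ = 0 := by rw [om_swap, g1, neg_zero]
  have g2' : om f₂ f₁ = 0 := by rw [om_swap, g2, neg_zero]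
  have g3' : om f₁ e₁ = -1 := by rw [om_swap, g3]
  have g4' : om f₂ e₁ = 0 := by rw [om_swap, g4, neg_zero]
  have g5' : om f₁ e₂ = 0 := by rw [om_swap, g5, neg_zero]
  have g6' : om f₂ e₂ = -1 := by rw [om_swap, g6]
  obtain ⟨a, ha⟩ : ∃ a, -κ * a = -t₁ * d₂ + c * t₂ := ⟨_, mul_div_cancel₀ _ (by simpa using hκ)⟩
  obtain ⟨b, hb⟩ : ∃ b, -κ * b = c * d₁ * d₂ - c := ⟨_, mul_div_cancel₀ _ (by simpa using hκ)⟩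
  refine ⟨e₁, e₂, f₁ + a • e₂, f₂ + a • e₁ + b • e₂, ?_, t₁, c, -c * d₁, 0, 0, -d₂, 1, t₂,
    by simp [hc0, hd1], one_ne_zero, by ring, by linear_combination d₁ * hc, by ring, by ring, 
    ?_, ?_, ?_, ?_⟩
  · constructor
    all_goals
      simp only [om_add_left, om_add_right, om_sub_left, om_sub_right, om_smul_left,
        om_smul_right, om_self, g1, g2, g3, g4, g5, g6, g1', g2', g3', g4', g5', g6']
    all_goals ring1
  all_goals
    simp only [h1, h2, om_add_left, om_add_right, om_sub_left, om_sub_right, om_smul_left,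
        om_smul_right, om_self, g1, g2, g3, g4, g5, g6, g1', g2', g3', g4', g5', g6']
  all_goals first | ring1 | linear_combination ha | linear_combination hb

end pairs
section mainlemma
variable {K : Type*} [Field K]

/-- Data describing `M` in a symplectic basis in the exceptional case. -/
structure Ex (M : Matrix (Fin 2 ⊕ Fin 2) (Fin 2 ⊕ Fin 2) K) (e₁ e₂ f₁ f₂ : Vec K)
    (m c a b y : K) : Prop where
  sb : SB e₁ e₂ f₁ f₂
  hm : m ≠ 0
  hc : c ^ 2 = 1
  me1 : M *ᵥ e₁ = (-m) • f₁
  me2 : M *ᵥ e₂ = c • e₂ + a • f₁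
  mf2 : M *ᵥ f₂ = c • f₂ + b • f₁
  mf1 : M *ᵥ f₁ = (1 / m) • e₁ + y • f₁ + (-(c * b) / m) • e₂ + (c * a / m) • f₂

lemma Ex.swap {M : Matrix (Fin 2 ⊕ Fin 2) (Fin 2 ⊕ Fin 2) K} {e₁ e₂ f₁ f₂ : Vec K}
    {m c a b y : K} (h : Ex M e₁ e₂ f₁ f₂ m c a b y) :
    Ex M e₁ f₂ f₁ ((-1 : K) • e₂) m c b (-a) y := by
  obtain ⟨⟨g1, g2, g3, g4, g5, g6⟩, hm, hc, me1, me2, mf2, mf1⟩ := h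
  refine ⟨⟨g4, ?_, g3, ?_, ?_, ?_⟩, hm, hc, me1, mf2, ?_, ?_⟩
  · rw [om_smul_right, om_swap, g5]; simp
  · rw [om_smul_right, g1]; simp
  · rw [om_swap, g2]; simp
  · rw [om_smul_right, om_swap, g6]; simp
  · rw [Matrix.mulVec_smul, me2]; module
  · rw [mf1]; module

lemma Ex.om_val {M : Matrix (Fin 2 ⊕ Fin 2) (Fin 2 ⊕ Fin 2) K} {e₁ e₂ f₁ f₂ : Vec K}
    {m c a b y : K} (h : Ex M e₁ e₂ f₁ f₂ m c a b y) (p₁ p₂ p₃ p₄ q₁ q₂ q₃ q₄ : K) :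
    om (p₁ • e₁ + p₂ • e₂ + p₃ • f₁ + p₄ • f₂) (q₁ • e₁ + q₂ • e₂ + q₃ • f₁ + q₄ • f₂)
      = p₁ * q₃ + p₂ * q₄ - p₃ * q₁ - p₄ * q₂ := by
  obtain ⟨⟨g1, g2, g3, g4, g5, g6⟩, hm, hc, me1, me2, mf2, mf1⟩ := h
  have g1' : om e₂ e₁ = 0 := by rw [om_swap, g1, neg_zero]
  have g2' : om f₂ f₁ = 0 := by rw [om_swap, g2, neg_zero]
  have g3' : om f₁ e₁ = -1 := by rw [om_swap, g3]
  have g4' : om f₂ e₁ = 0 := by rw [om_swap, g4, neg_zero]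
  have g5' : om f₁ e₂ = 0 := by rw [om_swap, g5, neg_zero]
  have g6' : om f₂ e₂ = -1 := by rw [om_swap, g6]
  simp only [om_add_left, om_add_right, om_sub_left, om_sub_right, om_smul_left,
        om_smul_right, om_self, g1, g2, g3, g4, g5, g6, g1', g2', g3', g4', g5', g6']
  ring

lemma Ex.mul_val {M : Matrix (Fin 2 ⊕ Fin 2) (Fin 2 ⊕ Fin 2) K} {e₁ e₂ f₁ f₂ : Vec K}
    {m c a b y : K} (h : Ex M e₁ e₂ f₁ f₂ m c a b y) (p₁ p₂ p₃ p₄ : K) :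
    M *ᵥ (p₁ • e₁ + p₂ • e₂ + p₃ • f₁ + p₄ • f₂) =
      (p₃ / m) • e₁ + (c * p₂ - c * b / m * p₃) • e₂ +
      (-m * p₁ + a * p₂ + y * p₃ + b * p₄) • f₁ + (c * p₄ + c * a / m * p₃) • f₂ := by
  simp only [Matrix.mulVec_add, Matrix.mulVec_smul, h.me1, h.me2, h.mf1, h.mf2]
  module

lemma Ex.good_pair {t₁ d₁ t₂ d₂ : K} (hd1 : d₁ ≠ 0) (hd1' : d₁ ≠ 1)
    (hq1 : (1 + d₁) ^ 2 ≠ t₁ ^ 2) (hd2 : d₂ ≠ 0) (hd2' : d₂ ≠ 1)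
    (hq2 : (1 + d₂) ^ 2 ≠ t₂ ^ 2) {M : Matrix (Fin 2 ⊕ Fin 2) (Fin 2 ⊕ Fin 2) K}
    (hM : IsSymplectic M) {e₁ e₂ f₁ f₂ : Vec K} {m c a b y : K}
    (h : Ex M e₁ e₂ f₁ f₂ m c a b y) (p₁ p₂ p₃ p₄ q₁ q₂ q₃ q₄ : K)
    (h1 : p₁ * q₃ + p₂ * q₄ - p₃ * q₁ - p₄ * q₂ = 0)
    (h2 : (p₃ / m) * q₃ + (c * p₂ - c * b / m * p₃) * q₄
      - (-m * p₁ + a * p₂ + y * p₃ + b * p₄) * q₁ - (c * p₄ + c * a / m * p₃) * q₂ = 0)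
    (h3 : (p₃ / m) * p₃ + (c * p₂ - c * b / m * p₃) * p₄
      - (-m * p₁ + a * p₂ + y * p₃ + b * p₄) * p₁ - (c * p₄ + c * a / m * p₃) * p₂ ≠ 0)
    (h4 : (q₃ / m) * q₃ + (c * q₂ - c * b / m * q₃) * q₄
      - (-m * q₁ + a * q₂ + y * q₃ + b * q₄) * q₁ - (c * q₄ + c * a / m * q₃) * q₂ ≠ 0) :
    Good t₁ d₁ t₂ d₂ M := by
  refine _root_.good_pair hd1 hd1' hq1 hd2 hd2' hq2 hM
    (v := p₁ • e₁ + p₂ • e₂ + p₃ • f₁ + p₄ • f₂) (w := q₁ • e₁ + q₂ • e₂ + q₃ • f₁ + q₄ • f₂)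
    ?_ ?_ ?_ ?_
  · rw [h.om_val, h1]
  · rw [h.mul_val, h.om_val, h2]
  · rwa [h.mul_val, h.om_val]
  · rwa [h.mul_val, h.om_val]

lemma Ex.good_ne {t₁ d₁ t₂ d₂ : K} (hd1 : d₁ ≠ 0) (hd1' : d₁ ≠ 1)
    (hq1 : (1 + d₁) ^ 2 ≠ t₁ ^ 2) (hd2 : d₂ ≠ 0) (hd2' : d₂ ≠ 1)
    (hq2 : (1 + d₂) ^ 2 ≠ t₂ ^ 2) {M : Matrix (Fin 2 ⊕ Fin 2) (Fin 2 ⊕ Fin 2) K}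
    (hM : IsSymplectic M) {e₁ e₂ f₁ f₂ : Vec K} {m c a b y : K}
    (h : Ex M e₁ e₂ f₁ f₂ m c a b y) (ha : a ≠ 0) : Good t₁ d₁ t₂ d₂ M := by
  have hm := h.hm
  have hc := h.hc
  have hc0 : c ≠ 0 := by rintro rfl; simp at hc
  by_cases two : (2 : K) = 0
  · have hz : d₁ - 1 ≠ 0 := sub_ne_zero.2 hd1'
    obtain ⟨D, hD⟩ : ∃ D, D = -c * (2 * d₁ - 1) / (d₁ * (d₁ - 1)) := ⟨_, rfl⟩
    have hD0 : D ≠ 0 := by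
      rw [hD, two]; simp [hc0, hd1, hz]
    obtain ⟨C, hC⟩ : ∃ C, C = (m / d₁) ^ 2 / m + m * (c / (d₁ - 1)) ^ 2
      - y * (c / (d₁ - 1)) * (m / d₁) := ⟨_, rfl⟩
    obtain ⟨l, hl⟩ : ∃ l, C - D * (a * b + a * l) = 1 := by
      refine ⟨((C - 1) / D - a * b) / a, ?_⟩
      field_simp; ring
    refine h.good_pair hd1 hd1' hq1 hd2 hd2' hq2 hM (d₁ / m) (1 / a) 0 0
      (-c / (d₁ - 1)) l (-m / d₁) a ?_ ?_ ?_ ?_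
    · field_simp; ring
    · field_simp; ring
    · have : d₁ * (d₁ - 1) / m ≠ 0 := by simp [hd1, hz, hm]
      convert this using 1
      field_simp; ring
    · convert one_ne_zero (α := K) using 1
      refine Eq.trans ?_ hl
      rw [hC, hD]
      field_simp; ring
  · obtain ⟨k, hk, hk2⟩ : ∃ k : K, k ^ 2 = 1 ∧ (2 - c * y + 2 * c * k) ≠ 0 := by
      by_cases h : 2 - c * y + 2 * c * 1 = 0
      · refine ⟨-1, by ring, fun h' => ?_⟩
        have : 2 * 2 * c = 0 := by linear_combination h - h'
        simp [two, hc0] at this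
      · exact ⟨1, by ring, h⟩
    refine h.good_pair hd1 hd1' hq1 hd2 hd2' hq2 hM 1 (k * b) 0 (-k * a)
      (-c * k / m) (1 / a) (-k) 0 ?_ ?_ ?_ ?_
    · field_simp; ring
    · field_simp; ring
    · convert hm using 1
      field_simp; ring
    · have : (2 - c * y + 2 * c * k) / m ≠ 0 := by simp [hk2, hm]
      convert this using 1
      field_simp
      linear_combination a * ((2 - c * y) * hk + k ^ 2 * hc)

lemma Ex.good {t₁ d₁ t₂ d₂ : K} (hd1 : d₁ ≠ 0) (hd1' : d₁ ≠ 1)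
    (hq1 : (1 + d₁) ^ 2 ≠ t₁ ^ 2) (hd2 : d₂ ≠ 0) (hd2' : d₂ ≠ 1)
    (hq2 : (1 + d₂) ^ 2 ≠ t₂ ^ 2) {M : Matrix (Fin 2 ⊕ Fin 2) (Fin 2 ⊕ Fin 2) K}
    (hM : IsSymplectic M) {e₁ e₂ f₁ f₂ : Vec K} {m c a b y : K}
    (h : Ex M e₁ e₂ f₁ f₂ m c a b y) : Good t₁ d₁ t₂ d₂ M := by
  have hm := h.hm
  have hc := h.hc
  have hc0 : c ≠ 0 := by rintro rfl; simp at hc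
  by_cases ha : a = 0
  swap
  · exact h.good_ne hd1 hd1' hq1 hd2 hd2' hq2 hM ha
  by_cases hb : b = 0
  swap
  · exact h.swap.good_ne hd1 hd1' hq1 hd2 hd2' hq2 hM hb
  subst ha hb
  by_cases hy : y = 2 * c
  · obtain ⟨⟨g1, g2, g3, g4, g5, g6⟩, -, -, me1, me2, mf2, mf1⟩ := h
    have g1' : om e₂ e₁ = 0 := by rw [om_swap, g1, neg_zero]
    have g2' : om f₂ f₁ = 0 := by rw [om_swap, g2, neg_zero]
    have g3' : om f₁ e₁ = -1 := by rw [om_swap, g3]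
    have g4' : om f₂ e₁ = 0 := by rw [om_swap, g4, neg_zero]
    have g5' : om f₁ e₂ = 0 := by rw [om_swap, g5, neg_zero]
    have g6' : om f₂ e₂ = -1 := by rw [om_swap, g6]
    refine good_trans hd1 (e₁ := e₂) (e₂ := (-1 : K) • f₁) (f₁ := f₂)
      (f₂ := e₁ + (c * m) • f₁) ?_ hc (κ := -1 / m) (by simp [hm]) ?_ ?_
    · constructor
      all_goals
        simp only [om_add_left, om_add_right, om_sub_left, om_sub_right, om_smul_left,
          om_smul_right, om_self, g1, g2, g3, g4, g5, g6, g1', g2', g3', g4', g5', g6']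
      all_goals ring1
    · rw [me2]; module
    · rw [Matrix.mulVec_smul, mf1, hy]
      have : -1 / m * (c * m) = -c := by field_simp
      rw [smul_add (-1 / m), smul_smul (-1 / m), this]
      module
  · refine h.good_pair hd1 hd1' hq1 hd2 hd2' hq2 hM 1 1 0 0
      (-c / m) 0 (-1) 1 ?_ ?_ ?_ ?_
    · ring
    · field_simp; ring
    · convert hm using 1
      ring
    · have : (2 * c - y) * c / m ≠ 0 := by
        simp [hc0, hm, sub_ne_zero, Ne.symm hy]
      convert this using 1
      field_simp
      linear_combination -hc

lemma exists_perp (v u : Vec K) : ∃ w : Vec K, w ≠ 0 ∧ om v w = 0 ∧ om u w = 0 := by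
  let L : Vec K →ₗ[K] (Fin 2 → K) :=
    { toFun := fun w => ![om v w, om u w]
      map_add' := fun x y => by funext i; fin_cases i <;> simp [om_add_right]
      map_smul' := fun x y => by funext i; fin_cases i <;> simp [om_smul_right] }
  have : LinearMap.ker L ≠ ⊥ := by
    apply LinearMap.ker_ne_bot_of_finrank_lt
    simp
  obtain ⟨w, hw, hw0⟩ := Submodule.exists_mem_ne_zero_of_ne_bot this
  have hw' : ![om v w, om u w] = 0 := hw
  exact ⟨w, hw0, by simpa using congrFun hw' 0, by simpa using congrFun hw' 1⟩

lemma exists_SB {v f : Vec K} (h : om v f = 1) : ∃ w₁ w₂, SB v w₁ f w₂ := by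
  obtain ⟨w, hw0, hw1, hw2⟩ := exists_perp v f
  have : ∃ z, om w z ≠ 0 := by
    by_contra! H
    exact hw0 (om_nondeg H)
  obtain ⟨z, hz⟩ := this
  have k1 : om w v = 0 := by rw [om_swap, hw1, neg_zero]
  have k2 : om w f = 0 := by rw [om_swap, hw2, neg_zero]
  have k3 : om f v = -1 := by rw [om_swap, h]
  have k4 : om f z = - om z f := om_swap _ _
  refine ⟨w, (1 / om w z) • (z - om z f • v - om v z • f), hw1, ?_, h, ?_, k2, ?_⟩
  all_goals simp only [om_sub_right, om_smul_right, om_self, k1, k2, k3, k4, h]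
  · ring
  · ring
  · field_simp; ring

lemma exists_q {M : Matrix (Fin 2 ⊕ Fin 2) (Fin 2 ⊕ Fin 2) K} (hM : IsSymplectic M)
    (hM2 : M * M ≠ 1) : ∃ v, om (M *ᵥ v) v ≠ 0 := by
  by_contra! H
  apply hM2
  have pol : ∀ x y, om (M *ᵥ x) y = om x (M *ᵥ y) := by
    intro x y
    have h := H (x + y)
    simp only [Matrix.mulVec_add, om_add_left, om_add_right, H] at h
    rw [om_swap x]
    linear_combination h
  have key : ∀ x, (M * M) *ᵥ x = x := by
    intro x
    rw [← sub_eq_zero]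
    apply om_nondeg
    intro y
    rw [om_sub_left, ← Matrix.mulVec_mulVec, pol, symp_om hM, sub_self]
  ext i j
  have := congrFun (key (Pi.single j 1)) i
  rw [Matrix.mulVec_single_one] at this
  simpa [Matrix.one_apply, Pi.single_apply] using this

lemma all_good {t₁ d₁ t₂ d₂ : K} (hd1 : d₁ ≠ 0) (hd1' : d₁ ≠ 1)
    (hq1 : (1 + d₁) ^ 2 ≠ t₁ ^ 2) (hd2 : d₂ ≠ 0) (hd2' : d₂ ≠ 1)
    (hq2 : (1 + d₂) ^ 2 ≠ t₂ ^ 2) {M : Matrix (Fin 2 ⊕ Fin 2) (Fin 2 ⊕ Fin 2) K}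
    (hM : IsSymplectic M) (hM2 : M * M ≠ 1) : Good t₁ d₁ t₂ d₂ M := by
  obtain ⟨e₁, hm⟩ := exists_q hM hM2
  obtain ⟨m, hmm⟩ : ∃ m, om (M *ᵥ e₁) e₁ = m := ⟨_, rfl⟩
  rw [hmm] at hm
  obtain ⟨f₁, hf⟩ : ∃ f, f = (-1 / m) • (M *ᵥ e₁) := ⟨_, rfl⟩
  have me1 : M *ᵥ e₁ = (-m) • f₁ := by
    rw [hf, smul_smul]
    have : -m * (-1 / m) = 1 := by field_simp
    rw [this, one_smul]
  have h1 : om e₁ f₁ = 1 := by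
    rw [hf, om_smul_right, om_swap, hmm]; field_simp
  obtain ⟨e₂, f₂, hSB⟩ := exists_SB h1
  by_cases H : ∃ r s : K, om (M *ᵥ (r • e₂ + s • f₂)) (r • e₂ + s • f₂) ≠ 0
  · obtain ⟨r, s, hrs⟩ := H
    refine good_pair hd1 hd1' hq1 hd2 hd2' hq2 hM (v := e₁) (w := r • e₂ + s • f₂) ?_ ?_ ?_ hrs
    · rw [om_add_right, om_smul_right, om_smul_right, hSB.ee, hSB.e12]; simp
    · rw [me1, om_add_right, om_smul_right, om_smul_right, om_smul_left, om_smul_left,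
        om_swap f₁ e₂, hSB.e21, hSB.ff]; simp
    · rwa [hmm]
  push Not at H
  have q1 : om (M *ᵥ e₂) e₂ = 0 := by simpa using H 1 0
  have q2 : om (M *ᵥ f₂) f₂ = 0 := by simpa using H 0 1
  have q3 : om (M *ᵥ e₂) f₂ + om (M *ᵥ f₂) e₂ = 0 := by
    have := H 1 1
    simpa only [one_smul, Matrix.mulVec_add, om_add_left, om_add_right, q1, q2, zero_add,
      add_zero, add_comm] using this
  have r0 : ∀ x, om (M *ᵥ x) f₁ = -1 / m * om x e₁ := by
    intro x; rw [hf, om_smul_right, symp_om hM]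
  obtain ⟨g1, g2, g3, g4, g5, g6⟩ := id hSB
  have g1' : om e₂ e₁ = 0 := by rw [om_swap, g1, neg_zero]
  have g2' : om f₂ f₁ = 0 := by rw [om_swap, g2, neg_zero]
  have g3' : om f₁ e₁ = -1 := by rw [om_swap, g3]
  have g4' : om f₂ e₁ = 0 := by rw [om_swap, g4, neg_zero]
  have g5' : om f₁ e₂ = 0 := by rw [om_swap, g5, neg_zero]
  have g6' : om f₂ e₂ = -1 := by rw [om_swap, g6]
  obtain ⟨c, hcc⟩ : ∃ c, om (M *ᵥ e₂) f₂ = c := ⟨_, rfl⟩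
  obtain ⟨a, haa⟩ : ∃ a, om e₁ (M *ᵥ e₂) = a := ⟨_, rfl⟩
  obtain ⟨b, hbb⟩ : ∃ a, om e₁ (M *ᵥ f₂) = a := ⟨_, rfl⟩
  obtain ⟨y, hyy⟩ : ∃ a, om e₁ (M *ᵥ f₁) = a := ⟨_, rfl⟩
  have me2 : M *ᵥ e₂ = c • e₂ + a • f₁ := by
    have := hSB.expand (M *ᵥ e₂)
    rw [r0, g1', hcc, haa, om_swap e₂, q1] at this
    simpa using this
  have q4 : om e₂ (M *ᵥ f₂) = c := by
    rw [om_swap]; linear_combination hcc - q3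
  have mf2 : M *ᵥ f₂ = c • f₂ + b • f₁ := by
    have := hSB.expand (M *ᵥ f₂)
    rw [r0, g4', q2, hbb, q4] at this
    rw [this]; module
  have hc : c ^ 2 = 1 := by
    have := symp_om hM e₂ f₂
    rw [me2, mf2] at this
    simp only [om_add_left, om_add_right, om_smul_left, om_smul_right, om_self, g6, g5, g2] at this
    linear_combination this
  have s1 : om (M *ᵥ f₁) f₁ = 1 / m := by rw [r0, g3']; ring
  have s2 : om (M *ᵥ f₁) f₂ = -(c * b) / m := by
    have := symp_om hM f₁ f₂
    rw [mf2, g2, om_add_right, om_smul_right, om_smul_right, s1] at this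
    linear_combination c * this - om (M *ᵥ f₁) f₂ * hc
  have s3 : om e₂ (M *ᵥ f₁) = c * a / m := by
    have := symp_om hM e₂ f₁
    rw [me2, g5, om_add_left, om_smul_left, om_smul_left, om_swap f₁, s1] at this
    linear_combination c * this - om e₂ (M *ᵥ f₁) * hc
  have mf1 : M *ᵥ f₁ = (1 / m) • e₁ + y • f₁ + (-(c * b) / m) • e₂ + (c * a / m) • f₂ := by
    have := hSB.expand (M *ᵥ f₁)
    rw [s1, s2, s3, hyy] at this
    rw [this]; module
  exact Ex.good hd1 hd1' hq1 hd2 hd2' hq2 hM ⟨hSB, hm, hc, me1, me2, mf2, mf1⟩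

end mainlemma
theorem product_of_cyclic_strictly_hyperbolic_classes_sp4 {K : Type*} [Field K]
    (P₁ P₂ : Matrix (Fin 2 ⊕ Fin 2) (Fin 2 ⊕ Fin 2) K)
    (hP₁ : IsSymplectic P₁) (hP₂ : IsSymplectic P₂)
    (hc₁ : IsCyclicMat P₁) (hc₂ : IsCyclicMat P₂)
    (hs₁ : IsStrictlyHyperbolic P₁) (hs₂ : IsStrictlyHyperbolic P₂)
    (M : Matrix (Fin 2 ⊕ Fin 2) (Fin 2 ⊕ Fin 2) K)
    (hM : IsSymplectic M)
    (hM2 : M * M ≠ (1 : Matrix (Fin 2 ⊕ Fin 2) (Fin 2 ⊕ Fin 2) K)) :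
    ∃ S₁ S₂ : Matrix (Fin 2 ⊕ Fin 2) (Fin 2 ⊕ Fin 2) K,
      IsSymplectic S₁ ∧ IsSymplectic S₂ ∧
      M = (S₁ * P₁ * S₁⁻¹) * (S₂ * P₂ * S₂⁻¹) := by
  obtain ⟨t₁, d₁, hd1, hd1', hq1, -, e, he, hind⟩ := hyp_data hs₁
  obtain ⟨t₂, d₂, hd2, hd2', hq2, ⟨e', he', hind'⟩, -⟩ := hyp_data hs₂
  obtain ⟨T₁, hT1, hT1'⟩ := normal_form hP₁ (t := t₁ / d₁) (d := 1 / d₁) (by simpa using hd1)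
    (by rw [Ne, div_eq_one_iff_eq hd1]; exact hd1'.symm)
    (by
      intro h; apply hq1; field_simp at h; linear_combination h) e he hind
  obtain ⟨T₂, hT2, hT2'⟩ := normal_form hP₂ (t := t₂) (d := d₂) hd2 hd2' hq2 e' he' hind'
  exact good_done hd1 hd1' hq1 hd2 hd2' hq2 hM hT1 hT2 hT1' hT2'
    (all_good hd1 hd1' hq1 hd2 hd2' hq2 hM hM2)
end
end

section
/- Let K be a field and n ≥ 2. Let A, B ∈ GL(n, K) be cyclic matrices. Then for every nonprimary matrix M ∈ GL(n, K) with det M = det A · det B, there exist X, Y ∈ GL(n, K) such that M = (X A X⁻¹) · (Y B Y⁻¹). -/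
open Matrix Polynomial

noncomputable section

/-- A matrix is nonprimary if its characteristic polynomial is a product of two
coprime nonconstant monic polynomials. -/
def IsNonprimary {ι : Type*} [Fintype ι] [DecidableEq ι] {K : Type*} [Field K]
    (M : Matrix ι ι K) : Prop :=
  ∃ f g : Polynomial K, f.Monic ∧ g.Monic ∧ 0 < f.natDegree ∧ 0 < g.natDegree ∧
    IsCoprime f g ∧ M.charpoly = f * g

/-- A transvection: `T ≠ 1`, `(T - 1)² = 0` and `rank (T - 1) = 1`. -/
def IsTransvection {ι : Type*} [Fintype ι] [DecidableEq ι] {K : Type*} [Field K]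
    (T : Matrix ι ι K) : Prop :=
  T ≠ 1 ∧ (T - 1) * (T - 1) = 0 ∧ (T - 1).rank = 1

/-- `v` is a cyclic vector of `A`. -/
def Cyc {ι : Type*} [Fintype ι] {K : Type*} [Field K]
    (A : Matrix ι ι K) (v : ι → K) : Prop :=
  ∀ W : Submodule K (ι → K), v ∈ W → (∀ x ∈ W, A *ᵥ x ∈ W) → W = ⊤

lemma aeval_mulVec_mem {ι : Type*} [Fintype ι] [DecidableEq ι] {K : Type*} [Field K]
    (A : Matrix ι ι K) (W : Submodule K (ι → K)) (hW : ∀ x ∈ W, A *ᵥ x ∈ W)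
    (p : K[X]) : ∀ x ∈ W, aeval A p *ᵥ x ∈ W := by
  induction p using Polynomial.induction_on' with
  | add p q hp hq =>
    intro x hx
    rw [map_add, Matrix.add_mulVec]
    exact W.add_mem (hp x hx) (hq x hx)
  | monomial n a =>
    intro x hx
    rw [aeval_monomial, Matrix.algebraMap_eq_diagonal]
    have h : ∀ m : ℕ, A ^ m *ᵥ x ∈ W := by
      intro m
      induction m with
      | zero => simpa using hx
      | succ m ih => rw [pow_succ', ← Matrix.mulVec_mulVec]; exact hW _ ih
    have := W.smul_mem a (h n)
    rw [← Matrix.mulVec_mulVec]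
    convert this using 1
    ext i
    simp [Matrix.mulVec_diagonal]

lemma cyc_of_inj {ι : Type*} [Fintype ι] [DecidableEq ι] {K : Type*} [Field K]
    (A : Matrix ι ι K) (v : ι → K)
    (key : ∀ p : K[X], p.degree < Fintype.card ι → aeval A p *ᵥ v = 0 → p = 0) : Cyc A v := by
  intro W hv hW
  let φ : degreeLT K (Fintype.card ι) →ₗ[K] W :=
    { toFun := fun p => ⟨aeval A (p : K[X]) *ᵥ v, aeval_mulVec_mem A W hW _ v hv⟩
      map_add' := by intro p q; ext; simp [Matrix.add_mulVec]
      map_smul' := by intro a q; ext; simp [Matrix.smul_mulVec] }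
  have hφ : Function.Injective φ := by
    rw [← LinearMap.ker_eq_bot, LinearMap.ker_eq_bot']
    intro p hp
    have h1 : aeval A (p : K[X]) *ᵥ v = 0 := congrArg Subtype.val hp
    exact Subtype.ext (key _ (mem_degreeLT.1 p.2) h1)
  apply Submodule.eq_top_of_finrank_eq
  refine le_antisymm (Submodule.finrank_le W) ?_
  have h := LinearMap.finrank_le_finrank_of_injective hφ
  rw [(degreeLTEquiv K (Fintype.card ι)).finrank_eq] at h
  simpa using h

lemma exists_cyc_of_isCyclicMat {ι : Type*} [Fintype ι] [DecidableEq ι] {K : Type*} [Field K]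
    (A : Matrix ι ι K) (hA : IsCyclicMat A) : ∃ v, Cyc A v := by
  obtain ⟨x, hx⟩ := Module.exists_ker_toSpanSingleton_eq_annihilator K[X]
    (Module.AEval' (Matrix.toLin' A))
  obtain ⟨v, rfl⟩ := (Module.AEval'.of _).surjective x
  rw [← span_minpoly_eq_annihilator, Matrix.minpoly_toLin'] at hx
  have key : ∀ p : K[X], aeval A p *ᵥ v = 0 → minpoly K A ∣ p := by
    intro p hp
    rw [← Ideal.mem_span_singleton, ← hx, LinearMap.mem_ker, LinearMap.toSpanSingleton_apply]
    have : aeval (Matrix.toLin' A) p = Matrix.toLin' (aeval A p) := by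
      exact Polynomial.aeval_algHom_apply (Matrix.toLinAlgEquiv' (R := K) (n := ι)) A p
    rw [Module.AEval'.of, ← Module.AEval.of_aeval_smul, this]
    simp [hp]
  refine ⟨v, cyc_of_inj A v fun p h3 h1 => ?_⟩
  have hdeg : (minpoly K A).natDegree = Fintype.card ι := by
    rw [← hA]; exact A.charpoly_natDegree_eq_dim
  refine Polynomial.eq_zero_of_dvd_of_degree_lt (key _ h1) ?_
  rw [Polynomial.degree_eq_natDegree (minpoly.ne_zero_of_finite K A), hdeg]
  exact h3

/-- The Krylov matrix. -/
def krylov {ι : Type*} [Fintype ι] [DecidableEq ι] {K : Type*} [Field K]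
    (A : Matrix ι ι K) (v : ι → K) (n : ℕ) : Matrix ι (Fin n) K :=
  Matrix.of fun i j => (A ^ (j : ℕ) *ᵥ v) i

/-- Companion matrix. -/
def compan {K : Type*} [Field K] (n : ℕ) (p : K[X]) : Matrix (Fin n) (Fin n) K :=
  Matrix.of fun i j => if (j : ℕ) + 1 < n then (if (i : ℕ) = j + 1 then 1 else 0) else - p.coeff i

lemma krylov_mulVec {ι : Type*} [Fintype ι] [DecidableEq ι] {K : Type*} [Field K]
    (A : Matrix ι ι K) (v : ι → K) (n : ℕ) (c : Fin n → K) :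
    krylov A v n *ᵥ c = ∑ j, c j • (A ^ (j : ℕ) *ᵥ v) := by
  ext i
  simp [krylov, Matrix.mulVec, dotProduct, mul_comm]

lemma mul_krylov {ι : Type*} [Fintype ι] [DecidableEq ι] {K : Type*} [Field K]
    (A : Matrix ι ι K) (v : ι → K) (n : ℕ) (hn : Fintype.card ι = n) :
    A * krylov A v n = krylov A v n * compan n A.charpoly := by
  have hCH : A ^ n *ᵥ v = - ∑ i : Fin n, A.charpoly.coeff i • (A ^ (i : ℕ) *ᵥ v) := by
    have h := Matrix.aeval_self_charpoly A
    rw [Polynomial.aeval_eq_sum_range, A.charpoly_natDegree_eq_dim, hn, Finset.sum_range_succ] at h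
    have hc : A.charpoly.coeff n = 1 := by
      have := A.charpoly_monic
      rw [Polynomial.Monic, Polynomial.leadingCoeff, A.charpoly_natDegree_eq_dim, hn] at this
      exact this
    rw [hc, one_smul, Finset.sum_range] at h
    have h2 := eq_neg_of_add_eq_zero_right h
    rw [h2, Matrix.neg_mulVec, Matrix.sum_mulVec]
    simp [Matrix.smul_mulVec]
  ext i j
  have h1 : (A * krylov A v n) i j = (A ^ ((j : ℕ) + 1) *ᵥ v) i := by
    rw [pow_succ', ← Matrix.mulVec_mulVec]
    rfl
  have h2 : (krylov A v n * compan n A.charpoly) i j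
      = (krylov A v n *ᵥ (fun k => compan n A.charpoly k j)) i := rfl
  rw [h1, h2, krylov_mulVec]
  by_cases hj : (j : ℕ) + 1 < n
  · rw [Finset.sum_eq_single ⟨(j : ℕ) + 1, hj⟩]
    · simp [compan, hj]
    · intro b _ hb
      have : ¬ ((b : ℕ) = j + 1) := fun h => hb (Fin.ext h)
      simp [compan, hj, this]
    · simp
  · have : (j : ℕ) + 1 = n := by omega
    rw [this, hCH]
    simp [compan, hj]

lemma krylov_inv {ι : Type*} [Fintype ι] [DecidableEq ι] {K : Type*} [Field K]
    (A : Matrix ι ι K) (v : ι → K) (hv : Cyc A v) (n : ℕ) (hn : Fintype.card ι = n) :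
    ∃ H : Matrix (Fin n) ι K, krylov A v n * H = 1 ∧ H * krylov A v n = 1 := by
  have htop := hv (LinearMap.range (krylov A v n).mulVecLin) (by
    rcases Nat.eq_zero_or_pos n with h0 | hpos
    · subst h0
      have : IsEmpty ι := Fintype.card_eq_zero_iff.1 hn
      have : v = 0 := Subsingleton.elim _ _
      rw [this]; exact Submodule.zero_mem _
    · refine ⟨Pi.single ⟨0, hpos⟩ 1, ?_⟩
      ext i
      simp [krylov]) (by
    rintro _ ⟨y, rfl⟩
    refine ⟨compan n A.charpoly *ᵥ y, ?_⟩
    simp only [Matrix.mulVecLin_apply, Matrix.mulVec_mulVec]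
    rw [mul_krylov A v n hn])
  have hs : Function.Surjective (krylov A v n).mulVec := LinearMap.range_eq_top.1 htop
  obtain ⟨H, hH⟩ := Matrix.mulVec_surjective_iff_exists_right_inverse.1 hs
  refine ⟨H, hH, ?_⟩
  exact (Matrix.mul_eq_one_comm_of_card_eq _ _ _ (by simp [hn])).1 hH

lemma similar_of_cyc {ι κ : Type*} [Fintype ι] [DecidableEq ι] [Fintype κ] [DecidableEq κ]
    {K : Type*} [Field K]
    (A : Matrix ι ι K) (v : ι → K) (hv : Cyc A v) (A' : Matrix κ κ K) (v' : κ → K)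
    (hv' : Cyc A' v') (hcard : Fintype.card ι = Fintype.card κ)
    (hp : A.charpoly = A'.charpoly) :
    ∃ (G : Matrix κ ι K) (H : Matrix ι κ K), G * H = 1 ∧ H * G = 1 ∧ A' = G * A * H := by
  obtain ⟨H, h1, h2⟩ := krylov_inv A v hv _ rfl
  obtain ⟨H', h1', h2'⟩ := krylov_inv A' v' hv' _ hcard.symm
  have e := mul_krylov A v _ rfl
  have e' := mul_krylov A' v' _ hcard.symm
  rw [← hp] at e'
  generalize krylov A v _ = G at *
  generalize krylov A' v' _ = G' at *
  refine ⟨G' * H, G * H', ?_, ?_, ?_⟩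
  · rw [Matrix.mul_assoc, ← Matrix.mul_assoc H, h2, Matrix.one_mul, h1']
  · rw [Matrix.mul_assoc, ← Matrix.mul_assoc H', h2', Matrix.one_mul, h1]
  · calc A' = A' * (G' * H') := by rw [h1', Matrix.mul_one]
      _ = (A' * G') * H' := by rw [Matrix.mul_assoc]
      _ = G' * (H * G * compan _ A.charpoly) * H' := by rw [e', h2, Matrix.one_mul]
      _ = G' * (H * (A * G)) * H' := by rw [Matrix.mul_assoc H, e]
      _ = _ := by simp only [Matrix.mul_assoc]

/-- `Unit ⊕ Fin s ≃ Fin (s + 1)`. -/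
def unitSumFin (s : ℕ) : Unit ⊕ Fin s ≃ Fin (s + 1) where
  toFun := Sum.elim (fun _ => 0) Fin.succ
  invFun := Fin.cases (Sum.inl ()) Sum.inr
  left_inv := by rintro (_ | i) <;> simp
  right_inv := by
    intro i
    induction i using Fin.cases <;> simp

lemma exists_pivot {K : Type*} [Field K] {s : ℕ} (N : Matrix (Fin (s + 1)) (Fin (s + 1)) K)
    (hN : N.det ≠ 0) :
    ∃ G H : Matrix (Fin (s + 1)) (Fin (s + 1)) K, G * H = 1 ∧ H * G = 1 ∧ (H * N * G) 0 0 ≠ 0 := by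
  by_cases h0 : N 0 0 = 0
  · obtain ⟨i, hi⟩ : ∃ i, N i 0 ≠ 0 := by
      by_contra! hcon
      exact hN (Matrix.det_eq_zero_of_column_eq_zero 0 hcon)
    have hi0 : (0 : Fin (s + 1)) ≠ i := by
      rintro rfl; exact hi h0
    refine ⟨Matrix.transvection 0 i (-1), Matrix.transvection 0 i 1, ?_, ?_, ?_⟩
    · rw [Matrix.transvection_mul_transvection_same _ _ hi0]; simp
    · rw [Matrix.transvection_mul_transvection_same _ _ hi0]; simp
    · rw [Matrix.mul_transvection_apply_of_ne _ _ _ _ hi0, Matrix.transvection_mul_apply_same, h0]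
      simpa using hi
  · exact ⟨1, 1, by simp, by simp, by simpa using h0⟩

lemma exists_LU {K : Type*} [Field K] (s : ℕ) : ∀ N : Matrix (Fin s) (Fin s) K, N.det ≠ 0 →
    ∃ G H L U : Matrix (Fin s) (Fin s) K, G * H = 1 ∧ H * G = 1 ∧ N = G * (L * U) * H ∧
      (∀ i j, i < j → L i j = 0) ∧ (∀ i, L i i ≠ 0) ∧
      (∀ i j, j < i → U i j = 0) ∧ (∀ i, U i i ≠ 0) := by
  induction s with
  | zero =>
    intro N _
    exact ⟨1, 1, 1, N, by simp, by simp, by simp, fun i => i.elim0, fun i => i.elim0,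
      fun i => i.elim0, fun i => i.elim0⟩
  | succ s ih =>
    intro N hN
    obtain ⟨G0, H0, h1, h2, hpiv⟩ := exists_pivot N hN
    set N' := H0 * N * G0 with hN'
    have hNN : N = G0 * N' * H0 := by
      rw [hN']
      calc N = (G0 * H0) * N * (G0 * H0) := by rw [h1]; simp
        _ = _ := by simp only [Matrix.mul_assoc]
    have hdet' : N'.det ≠ 0 := by
      intro h
      apply hN
      rw [hNN, Matrix.det_mul, Matrix.det_mul, h]; simp
    set e := unitSumFin s with he
    have e0 : ∀ x, e (Sum.inl x) = 0 := fun _ => rfl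
    have e1 : ∀ i, e (Sum.inr i) = i.succ := fun _ => rfl
    set a := (N'.submatrix e e).toBlocks₁₁ with ha
    set b := (N'.submatrix e e).toBlocks₁₂ with hb
    set c := (N'.submatrix e e).toBlocks₂₁ with hc
    set D := (N'.submatrix e e).toBlocks₂₂ with hD
    have hblk : N'.submatrix e e = Matrix.fromBlocks a b c D := (Matrix.fromBlocks_toBlocks _).symm
    have hadet : IsUnit a.det := by
      rw [Matrix.det_unique]
      exact isUnit_iff_ne_zero.2 hpiv
    let _ : Invertible a := Matrix.invertibleOfIsUnitDet a hadet
    have hSdet : (D - c * ⅟a * b).det ≠ 0 := by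
      intro h
      apply hdet'
      rw [← Matrix.det_submatrix_equiv_self e, hblk, Matrix.det_fromBlocks₁₁, h, mul_zero]
    obtain ⟨G, H, L, U, g1, g2, hS, hL, hL', hU, hU'⟩ := ih _ hSdet
    set G1 : Matrix (Unit ⊕ Fin s) (Unit ⊕ Fin s) K := Matrix.fromBlocks 1 0 0 G with hG1
    set H1 : Matrix (Unit ⊕ Fin s) (Unit ⊕ Fin s) K := Matrix.fromBlocks 1 0 0 H with hH1
    set L1 : Matrix (Unit ⊕ Fin s) (Unit ⊕ Fin s) K :=
      Matrix.fromBlocks 1 0 (H * c * ⅟a) L with hL1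
    set U1 : Matrix (Unit ⊕ Fin s) (Unit ⊕ Fin s) K :=
      Matrix.fromBlocks a (b * G) 0 U with hU1
    have k1 : G1 * H1 = 1 := by
      rw [hG1, hH1, Matrix.fromBlocks_multiply]; simp [g1]
    have k2 : H1 * G1 = 1 := by
      rw [hG1, hH1, Matrix.fromBlocks_multiply]; simp [g2]
    have k3 : Matrix.fromBlocks a b c D = G1 * (L1 * U1) * H1 := by
      rw [hG1, hH1, hL1, hU1]
      simp only [Matrix.fromBlocks_multiply]
      have hc' : G * (H * c) = c := by rw [← Matrix.mul_assoc, g1, Matrix.one_mul]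
      have hb' : b * G * H = b := by rw [Matrix.mul_assoc, g1, Matrix.mul_one]
      congr 1
      · simp
      · simp [hb']
      · simp only [Matrix.mul_zero, Matrix.zero_mul, zero_add, add_zero, Matrix.mul_one]
        rw [Matrix.mul_assoc, invOf_mul_self, Matrix.mul_one, hc']
      · simp only [Matrix.mul_zero, Matrix.zero_mul, zero_add]
        rw [Matrix.mul_add, Matrix.add_mul, ← hS]
        have : G * (H * c * ⅟a * (b * G)) * H = c * ⅟a * b := by
          calc _ = (G * (H * c)) * ⅟a * (b * G * H) := by simp only [Matrix.mul_assoc]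
            _ = _ := by rw [hc', hb']
        rw [this]; simp
    have sm : ∀ P Q : Matrix (Unit ⊕ Fin s) (Unit ⊕ Fin s) K,
        (P * Q).submatrix e.symm e.symm = P.submatrix e.symm e.symm * Q.submatrix e.symm e.symm :=
      fun P Q => (Matrix.submatrix_mul_equiv _ _ _ _ _).symm
    have k4 : N' = (G1.submatrix e.symm e.symm) * (L1.submatrix e.symm e.symm *
        U1.submatrix e.symm e.symm) * H1.submatrix e.symm e.symm := by
      rw [← sm, ← sm, ← sm, ← k3, ← hblk]
      simp
    have k1' : G1.submatrix e.symm e.symm * H1.submatrix e.symm e.symm = 1 := by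
      rw [← sm, k1]; simp
    have k2' : H1.submatrix e.symm e.symm * G1.submatrix e.symm e.symm = 1 := by
      rw [← sm, k2]; simp
    have es0 : e.symm 0 = Sum.inl () := rfl
    have es1 : ∀ i : Fin s, e.symm i.succ = Sum.inr i := fun _ => rfl
    refine ⟨G0 * G1.submatrix e.symm e.symm, H1.submatrix e.symm e.symm * H0,
      L1.submatrix e.symm e.symm, U1.submatrix e.symm e.symm, ?_, ?_, ?_, ?_, ?_, ?_, ?_⟩
    · rw [Matrix.mul_assoc, ← Matrix.mul_assoc _ _ H0, k1', Matrix.one_mul, h1]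
    · rw [Matrix.mul_assoc, ← Matrix.mul_assoc H0, h2, Matrix.one_mul, k2']
    · rw [hNN]
      nth_rewrite 1 [k4]
      simp only [Matrix.mul_assoc]
    · intro i j hij
      induction i using Fin.cases with
      | zero =>
        induction j using Fin.cases with
        | zero => simp at hij
        | succ j => simp [es0, es1, hL1]
      | succ i =>
        induction j using Fin.cases with
        | zero => simp at hij
        | succ j => simpa [es0, es1, hL1] using hL i j (by simpa using hij)
    · intro i
      induction i using Fin.cases with
      | zero => simp [es0, hL1]
      | succ i => simpa [es1, hL1] using hL' i
    · intro i j hij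
      induction i using Fin.cases with
      | zero => simp at hij
      | succ i =>
        induction j using Fin.cases with
        | zero => simp [es0, es1, hU1]
        | succ j => simpa [es0, es1, hU1] using hU i j (by simpa using hij)
    · intro i
      induction i using Fin.cases with
      | zero =>
        simp only [Matrix.submatrix_apply, es0, hU1, Matrix.fromBlocks_apply₁₁]
        exact hpiv
      | succ i => simpa [es1, hU1] using hU' i

lemma Cyc.conj {ι : Type*} [Fintype ι] [DecidableEq ι] {K : Type*} [Field K]
    {A : Matrix ι ι K} {v : ι → K} (h : Cyc A v) {G H : Matrix ι ι K}
    (h1 : G * H = 1) (h2 : H * G = 1) : Cyc (G * A * H) (G *ᵥ v) := by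
  intro W hv hW
  have := h (W.comap G.mulVecLin) (by simpa using hv) (by
    intro x hx
    simp only [Submodule.mem_comap, Matrix.mulVecLin_apply, Matrix.mulVec_mulVec] at hx ⊢
    have := hW _ hx
    rwa [Matrix.mulVec_mulVec, Matrix.mul_assoc, h2, Matrix.mul_one] at this)
  rw [eq_top_iff]
  intro x _
  have hx : H *ᵥ x ∈ W.comap G.mulVecLin := by rw [this]; trivial
  simpa [Matrix.mulVec_mulVec, h1] using hx

lemma eq_top_of_single_mem {ι : Type*} [Fintype ι] [DecidableEq ι] {K : Type*} [Field K]
    (W : Submodule K (ι → K)) (h : ∀ i, Pi.single i (1 : K) ∈ W) : W = ⊤ := by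
  rw [eq_top_iff, ← (Pi.basisFun K ι).span_eq, Submodule.span_le]
  rintro _ ⟨i, rfl⟩
  simpa using h i

/-- Leading-term extraction. -/
lemma single_mem_of {ι : Type*} [Fintype ι] [DecidableEq ι] {K : Type*} [Field K]
    (W : Submodule K (ι → K)) (x : ι → K) (hx : x ∈ W) (i : ι) (hi : x i ≠ 0)
    (h : ∀ j, j ≠ i → x j ≠ 0 → Pi.single j (1 : K) ∈ W) : Pi.single i (1 : K) ∈ W := by
  have hsum : x = ∑ j, x j • (Pi.single j (1 : K) : ι → K) := by
    ext k
    simp [Finset.sum_apply, Pi.single_apply]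
  have h2 : x i • (Pi.single i (1 : K) : ι → K) ∈ W := by
    rw [← Finset.add_sum_erase _ _ (Finset.mem_univ i)] at hsum
    have : x i • (Pi.single i (1 : K) : ι → K) =
        x - ∑ j ∈ Finset.univ.erase i, x j • (Pi.single j (1 : K) : ι → K) := by
      nth_rewrite 2 [hsum]; simp
    rw [this]
    refine W.sub_mem hx (W.sum_mem fun j hj => ?_)
    by_cases hxj : x j = 0
    · simp [hxj]
    · exact W.smul_mem _ (h j (Finset.ne_of_mem_erase hj) hxj)
  have := W.smul_mem (x i)⁻¹ h2
  rwa [smul_smul, inv_mul_cancel₀ hi, one_smul] at this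

lemma cyc_lower {K : Type*} [Field K] {s : ℕ} (L : Matrix (Fin (s + 1)) (Fin (s + 1)) K)
    (hL : ∀ i j, i < j → L i j = 0) (hL' : ∀ i, L i i ≠ 0) :
    Cyc (L.submatrix id (Equiv.subRight 1)) (Pi.single 0 1) := by
  intro W h0 hW
  have hcol : ∀ j, (L.submatrix id (Equiv.subRight 1)) *ᵥ (Pi.single j 1) = fun i => L i (j - 1) := by
    intro j; ext i; simp
  have main : ∀ k : ℕ, ∀ j : Fin (s + 1), (j : ℕ) + k = s → Pi.single j (1 : K) ∈ W := by
    intro k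
    induction k using Nat.strong_induction_on with
    | _ k ih =>
      intro j hj
      -- `single (j+1) ∈ W`
      have hmem : Pi.single (j + 1) (1 : K) ∈ W := by
        rcases Nat.eq_zero_or_pos k with hk | hk
        · have : j = Fin.last s := Fin.ext (by simp; omega)
          rw [this, Fin.last_add_one]; exact h0
        · refine ih (k - 1) (by omega) (j + 1) ?_
          have : j < Fin.last s := by rw [Fin.lt_def]; simp; omega
          rw [Fin.val_add_one_of_lt this]; omega
      have h3 := hW _ hmem
      rw [hcol, add_sub_cancel_right] at h3
      refine single_mem_of W _ h3 j (hL' j) ?_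
      intro i hij hne
      have hlt : j < i := by
        by_contra hcon
        exact hne (hL i j (lt_of_le_of_ne (not_lt.1 hcon) hij))
      have := i.2
      rw [Fin.lt_def] at hlt
      exact ih (s - i) (by omega) i (by omega)
  exact eq_top_of_single_mem W fun i => main (s - i) i (by have := i.2; omega)

lemma cyc_upper {K : Type*} [Field K] {s : ℕ} (U : Matrix (Fin (s + 1)) (Fin (s + 1)) K)
    (hU : ∀ i j, j < i → U i j = 0) (hU' : ∀ i, U i i ≠ 0) :
    Cyc (U.submatrix (Equiv.subRight 1) id) (Pi.single 0 1) := by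
  intro W h0 hW
  have hcol : ∀ j, (U.submatrix (Equiv.subRight 1) id) *ᵥ (Pi.single j 1) = fun i => U (i - 1) j := by
    intro j; ext i; simp
  have main : ∀ k : ℕ, ∀ j : Fin (s + 1), (j : ℕ) = k → Pi.single j (1 : K) ∈ W := by
    intro k
    induction k using Nat.strong_induction_on with
    | _ k ih =>
      intro j hj
      rcases Nat.eq_zero_or_pos k with hk | hk
      · have : j = 0 := Fin.ext (by rw [Fin.val_zero]; omega)
        rw [this]; exact h0
      · have hj0 : j ≠ 0 := by
          intro h; rw [h, Fin.val_zero] at hj; omega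
        have hj1 : ((j - 1 : Fin (s + 1)) : ℕ) = j - 1 := by
          rw [Fin.val_sub_one_of_ne_zero hj0]
        have h3 := hW _ (ih (k - 1) (by omega) (j - 1) (by omega))
        rw [hcol] at h3
        refine single_mem_of W _ h3 j (hU' _) ?_
        intro i hij hne
        by_cases hi0 : i = 0
        · rw [hi0]; exact h0
        have hi1 : ((i - 1 : Fin (s + 1)) : ℕ) = i - 1 := by
          rw [Fin.val_sub_one_of_ne_zero hi0]
        have hle : i - 1 ≤ j - 1 := by
          by_contra hcon
          exact hne (hU _ _ (not_le.1 hcon))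
        rw [Fin.le_def, hi1, hj1] at hle
        have : (i : ℕ) ≠ j := fun h => hij (Fin.ext h)
        have : (i : ℕ) ≠ 0 := fun h => hi0 (Fin.ext h)
        exact ih i (by omega) i rfl
  exact eq_top_of_single_mem W fun i => main i i rfl

lemma common_cyc {K : Type*} [Field K] {s : ℕ} (hs : 0 < s) (N : Matrix (Fin s) (Fin s) K)
    (hN : N.det ≠ 0) (d : K) (hd : d ≠ 0) :
    ∃ (R C : Matrix (Fin s) (Fin s) K) (u : Fin s → K), N = R * C ∧ R.det = d ∧
      Cyc R u ∧ Cyc C u := by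
  obtain ⟨s, rfl⟩ : ∃ t, s = t + 1 := ⟨s - 1, by omega⟩
  obtain ⟨G, H, L, U, h1, h2, hNe, hL, hL', hU, hU'⟩ := exists_LU _ N hN
  set σ : Equiv.Perm (Fin (s + 1)) := Equiv.subRight 1 with hσ
  have hdL : (L.submatrix id σ).det ≠ 0 := by
    intro h
    apply hN
    have : L * U = L.submatrix id σ * U.submatrix σ id := by
      rw [Matrix.submatrix_mul_equiv]; simp
    rw [hNe, this, Matrix.det_mul, Matrix.det_mul, Matrix.det_mul, h]
    ring
  set t := d / (L.submatrix id σ).det with ht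
  have ht0 : t ≠ 0 := div_ne_zero hd hdL
  set δ : Fin (s + 1) → K := fun i => if i = 0 then t else 1 with hδ
  have hδ0 : ∀ i, δ i ≠ 0 := by
    intro i; simp only [hδ]; split_ifs <;> simp [ht0]
  set L2 := L * Matrix.diagonal δ with hL2
  set U2 := Matrix.diagonal (fun i => (δ i)⁻¹) * U with hU2
  have hLU : L * U = L2 * U2 := by
    rw [hL2, hU2, Matrix.mul_assoc, ← Matrix.mul_assoc (Matrix.diagonal δ),
      Matrix.diagonal_mul_diagonal]
    simp [hδ0]
  have hdL2 : (L2.submatrix id σ).det = d := by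
    have e1 : (L2.submatrix id σ).det = (L.submatrix id σ).det * t := by
      rw [Matrix.det_permute', Matrix.det_permute', hL2, Matrix.det_mul, Matrix.det_diagonal]
      simp [hδ, mul_assoc]
    rw [e1, ht]; field_simp
  refine ⟨G * L2.submatrix id σ * H, G * U2.submatrix σ id * H, G *ᵥ Pi.single 0 1, ?_, ?_, ?_, ?_⟩
  · have : L2 * U2 = L2.submatrix id σ * U2.submatrix σ id := by
      rw [Matrix.submatrix_mul_equiv]; simp
    rw [hNe, hLU, this]
    calc G * (L2.submatrix id σ * U2.submatrix σ id) * H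
        = G * (L2.submatrix id σ * (H * G) * U2.submatrix σ id) * H := by rw [h2]; simp
      _ = _ := by simp only [Matrix.mul_assoc]
  · have : G.det * H.det = 1 := by rw [← Matrix.det_mul, h1, Matrix.det_one]
    rw [Matrix.det_mul, Matrix.det_mul, hdL2, mul_right_comm, this, one_mul]
  · refine Cyc.conj (cyc_lower L2 ?_ ?_) h1 h2
    · intro i j hij; simp [hL2, hL i j hij]
    · intro i; simp [hL2, hL' i, hδ0]
  · refine Cyc.conj (cyc_upper U2 ?_ ?_) h1 h2
    · intro i j hij; simp [hU2, hU i j hij]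
    · intro i; simp [hU2, hU' i, hδ0]

section completion

variable {ι κ : Type*} [Fintype ι] [DecidableEq ι] [Fintype κ] [DecidableEq κ]

lemma det_sub_vecMulVec_field {F : Type*} [Field F] (M : Matrix ι ι F) (hM : M.det ≠ 0)
    (y w : ι → F) : (M - vecMulVec y w).det = M.det - w ⬝ᵥ (M.adjugate *ᵥ y) := by
  have h := Matrix.det_add_replicateCol_mul_replicateRow (ι := Unit) (isUnit_iff_ne_zero.2 hM)
    (-y) w
  have e : M + replicateCol Unit (-y) * replicateRow Unit w = M - vecMulVec y w := by
    ext i j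
    simp [Matrix.mul_apply, vecMulVec_apply, sub_eq_add_neg]
  rw [e] at h
  rw [h, Matrix.det_unique (1 + replicateRow Unit w * M⁻¹ * replicateCol Unit (-y))]
  have e2 : (replicateRow Unit w * M⁻¹ * replicateCol Unit (-y)) default default
      = - (w ⬝ᵥ (M⁻¹ *ᵥ y)) := by
    rw [Matrix.mul_assoc, ← Matrix.replicateCol_mulVec, Matrix.replicateRow_mul_replicateCol_apply,
      Matrix.mulVec_neg, dotProduct_neg]
  rw [Matrix.add_apply, e2, Matrix.one_apply_eq, Matrix.inv_def, Ring.inverse_eq_inv',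
    Matrix.smul_mulVec, dotProduct_smul, smul_eq_mul]
  field_simp
  ring

lemma det_block_field {F : Type*} [Field F] (M : Matrix ι ι F) (hM : M.det ≠ 0)
    (N : Matrix κ κ F) (hN : N.det ≠ 0) (Z : Matrix ι κ F) (u : κ → F) (w : ι → F) :
    (fromBlocks M (-Z) (-(vecMulVec u w)) N).det
      = M.det * N.det - w ⬝ᵥ (M.adjugate *ᵥ (Z *ᵥ (N.adjugate *ᵥ u))) := by
  let _ : Invertible N := Matrix.invertibleOfIsUnitDet N (isUnit_iff_ne_zero.2 hN)
  rw [Matrix.det_fromBlocks₂₂]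
  have e : M - -Z * ⅟N * -(vecMulVec u w) = M - vecMulVec (Z *ᵥ (N⁻¹ *ᵥ u)) w := by
    rw [Matrix.invOf_eq_nonsing_inv, Matrix.neg_mul, Matrix.neg_mul, Matrix.mul_neg, neg_neg,
      Matrix.mul_assoc, Matrix.mul_vecMulVec, Matrix.mul_vecMulVec]
  rw [e, det_sub_vecMulVec_field _ hM, Matrix.inv_def, Ring.inverse_eq_inv',
    Matrix.smul_mulVec, Matrix.mulVec_smul, Matrix.mulVec_smul, dotProduct_smul, smul_eq_mul]
  field_simp

lemma comp_mulVec_map {α β R S : Type*} [Fintype β] [CommRing R] [CommRing S] (f : R →+* S)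
    (A : Matrix α β R) (v : β → R) : f ∘ (A *ᵥ v) = (A.map f) *ᵥ (f ∘ v) := by
  ext i
  simp [RingHom.map_mulVec]

lemma det_sub_vecMulVec_aux {R F : Type*} [CommRing R] [Field F] (f : R →+* F)
    (inj : Function.Injective f) (M : Matrix ι ι R) (hM : M.det ≠ 0)
    (y w : ι → R) : (M - vecMulVec y w).det = M.det - w ⬝ᵥ (M.adjugate *ᵥ y) := by
  apply inj
  have h := det_sub_vecMulVec_field (f.mapMatrix M)
    (by rw [← RingHom.map_det]; exact fun h => hM (inj (by simpa using h))) (f ∘ y) (f ∘ w)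
  have e : f.mapMatrix (M - vecMulVec y w) = f.mapMatrix M - vecMulVec (f ∘ y) (f ∘ w) := by
    ext i j; simp [vecMulVec_apply]
  rw [RingHom.map_det, e, h, map_sub, RingHom.map_det, RingHom.map_dotProduct, comp_mulVec_map,
    ← RingHom.map_adjugate]
  rfl

lemma det_block_aux {R F : Type*} [CommRing R] [Field F] (f : R →+* F)
    (inj : Function.Injective f) (M : Matrix ι ι R) (hM : M.det ≠ 0)
    (N : Matrix κ κ R) (hN : N.det ≠ 0) (Z : Matrix ι κ R) (u : κ → R) (w : ι → R) :
    (fromBlocks M (-Z) (-(vecMulVec u w)) N).det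
      = M.det * N.det - w ⬝ᵥ (M.adjugate *ᵥ (Z *ᵥ (N.adjugate *ᵥ u))) := by
  apply inj
  have h := det_block_field (f.mapMatrix M)
    (by rw [← RingHom.map_det]; exact fun h => hM (inj (by simpa using h)))
    (f.mapMatrix N)
    (by rw [← RingHom.map_det]; exact fun h => hN (inj (by simpa using h)))
    (Z.map f) (f ∘ u) (f ∘ w)
  have e : f.mapMatrix (fromBlocks M (-Z) (-(vecMulVec u w)) N) =
      fromBlocks (f.mapMatrix M) (-(Z.map f)) (-(vecMulVec (f ∘ u) (f ∘ w))) (f.mapMatrix N) := by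
    ext i j
    rcases i with i | i <;> rcases j with j | j <;> simp [vecMulVec_apply]
  rw [RingHom.map_det, map_sub, map_mul, RingHom.map_det, RingHom.map_det, RingHom.map_dotProduct,
    e, h, comp_mulVec_map, comp_mulVec_map, comp_mulVec_map, ← RingHom.map_adjugate,
    ← RingHom.map_adjugate]
  rfl

lemma det_sub_vecMulVec_dom {R : Type*} [CommRing R] [IsDomain R] (M : Matrix ι ι R)
    (hM : M.det ≠ 0)
    (y w : ι → R) : (M - vecMulVec y w).det = M.det - w ⬝ᵥ (M.adjugate *ᵥ y) :=
  det_sub_vecMulVec_aux (algebraMap R (FractionRing R))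
    (IsFractionRing.injective R (FractionRing R)) M hM y w

lemma det_block_dom {R : Type*} [CommRing R] [IsDomain R] (M : Matrix ι ι R) (hM : M.det ≠ 0)
    (N : Matrix κ κ R) (hN : N.det ≠ 0) (Z : Matrix ι κ R) (u : κ → R) (w : ι → R) :
    (fromBlocks M (-Z) (-(vecMulVec u w)) N).det
      = M.det * N.det - w ⬝ᵥ (M.adjugate *ᵥ (Z *ᵥ (N.adjugate *ᵥ u))) :=
  det_block_aux (algebraMap R (FractionRing R))
    (IsFractionRing.injective R (FractionRing R)) M hM N hN Z u w

lemma vecMulVec_mulVec_smul {α β R : Type*} [Fintype β] [CommRing R] (y : α → R) (φ z : β → R) :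
    vecMulVec y φ *ᵥ z = (φ ⬝ᵥ z) • y := by
  ext1 i
  simp only [Matrix.mulVec, dotProduct, vecMulVec_apply, Pi.smul_apply, smul_eq_mul,
    Finset.sum_mul]
  exact Finset.sum_congr rfl fun j _ => by ring

variable {K : Type*} [Field K]

/-- The polynomial `w adj(X - P) y`. -/
def hpol (P : Matrix ι ι K) (w y : ι → K) : K[X] :=
  (C ∘ w) ⬝ᵥ ((charmatrix P).adjugate *ᵥ (C ∘ y))

lemma charmatrix_det_ne (P : Matrix ι ι K) : (charmatrix P).det ≠ 0 :=
  P.charpoly_monic.ne_zero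

lemma hpol_eq (P : Matrix ι ι K) (w y : ι → K) :
    hpol P w y = P.charpoly - (P + vecMulVec y w).charpoly := by
  have h := det_sub_vecMulVec_dom (charmatrix P) (charmatrix_det_ne P) (C ∘ y) (C ∘ w)
  have e : charmatrix P - vecMulVec (C ∘ y) (C ∘ w) = charmatrix (P + vecMulVec y w) := by
    ext1 i j
    simp [charmatrix, vecMulVec_apply, sub_sub]
  rw [e] at h
  rw [Matrix.charpoly, Matrix.charpoly, h, hpol]
  ring

lemma hpol_degree (P : Matrix ι ι K) (w y : ι → K) :
    (hpol P w y).degree < Fintype.card ι := by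
  rw [hpol_eq]
  have h1 : P.charpoly.degree = Fintype.card ι := P.charpoly_degree_eq_dim
  have h2 : (P + vecMulVec y w).charpoly.degree = Fintype.card ι := Matrix.charpoly_degree_eq_dim _
  have := Polynomial.degree_sub_lt_left (h1.trans h2.symm) P.charpoly_monic.ne_zero
    (by rw [P.charpoly_monic.leadingCoeff, (Matrix.charpoly_monic _).leadingCoeff])
  rwa [h1] at this

lemma hpol_shift (P : Matrix ι ι K) (w y : ι → K) :
    hpol P w (P *ᵥ y) = X * hpol P w y - P.charpoly * C (w ⬝ᵥ y) := by
  have e : charmatrix P *ᵥ (C ∘ y) = (X : K[X]) • (C ∘ y) - C ∘ (P *ᵥ y) := by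
    ext1 i
    simp [charmatrix, Matrix.sub_mulVec, Matrix.mulVec_diagonal, RingHom.map_mulVec]
  have e2 : (charmatrix P).adjugate *ᵥ (charmatrix P *ᵥ (C ∘ y)) = P.charpoly • (C ∘ y) := by
    rw [Matrix.mulVec_mulVec, Matrix.adjugate_mul, Matrix.smul_mulVec, Matrix.one_mulVec]
    rfl
  rw [e, Matrix.mulVec_sub, Matrix.mulVec_smul, sub_eq_iff_eq_add, ← sub_eq_iff_eq_add'] at e2
  rw [hpol, ← e2, dotProduct_sub, dotProduct_smul, dotProduct_smul, smul_eq_mul, smul_eq_mul,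
    ← hpol, ← RingHom.map_dotProduct]

lemma hpol_surj (P : Matrix ι ι K) (w : ι → K) (hw : Cyc Pᵀ w) (h : K[X])
    (hh : h.degree < Fintype.card ι) : ∃ y, hpol P w y = h := by
  have hadd : ∀ a b : ι → K, hpol P w (a + b) = hpol P w a + hpol P w b := by
    intro a b
    have : (C ∘ (a + b) : ι → K[X]) = C ∘ a + C ∘ b := by ext1 i; simp
    rw [hpol, this, Matrix.mulVec_add, dotProduct_add]; rfl
  have hsmul : ∀ (c : K) (b : ι → K), hpol P w (c • b) = c • hpol P w b := by
    intro a b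
    have : (C ∘ (a • b) : ι → K[X]) = C a • (C ∘ b) := by ext1 i; simp
    rw [hpol, this, Matrix.mulVec_smul, dotProduct_smul, smul_eq_mul, ← Polynomial.smul_eq_C_mul]
    rfl
  let ψ : (ι → K) →ₗ[K] degreeLT K (Fintype.card ι) :=
    { toFun := fun y => ⟨hpol P w y, mem_degreeLT.2 (hpol_degree P w y)⟩
      map_add' := fun a b => Subtype.ext (hadd a b)
      map_smul' := fun a b => Subtype.ext (hsmul a b) }
  have hker : ∀ y, hpol P w y = 0 → w ⬝ᵥ y = 0 ∧ hpol P w (P *ᵥ y) = 0 := by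
    intro y hy
    have h1 := hpol_shift P w y
    rw [hy, mul_zero, zero_sub] at h1
    have h2 := hpol_degree P w (P *ᵥ y)
    have h3 : w ⬝ᵥ y = 0 := by
      by_contra hne
      rw [h1, degree_neg, degree_mul, degree_C hne, add_zero, P.charpoly_degree_eq_dim] at h2
      exact lt_irrefl _ h2
    refine ⟨h3, ?_⟩
    rw [h1, h3]; simp
  have hinj : Function.Injective ψ := by
    rw [← LinearMap.ker_eq_bot, LinearMap.ker_eq_bot']
    intro y hy
    have hy' : hpol P w y = 0 := congrArg Subtype.val hy
    let W : Submodule K (ι → K) :=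
      { carrier := {φ | ∀ z, hpol P w z = 0 → φ ⬝ᵥ z = 0}
        add_mem' := by
          intro a b ha hb z hz
          rw [add_dotProduct, ha z hz, hb z hz, add_zero]
        zero_mem' := by intro z _; simp
        smul_mem' := by
          intro c a ha z hz
          rw [smul_dotProduct, ha z hz, smul_zero] }
    have hW := hw W (fun z hz => (hker z hz).1) (by
      intro φ hφ z hz
      have := hφ _ (hker z hz).2
      rwa [dotProduct_mulVec, ← Matrix.mulVec_transpose] at this)
    ext i
    have : (Pi.single i 1 : ι → K) ∈ W := by rw [hW]; trivial
    simpa using this y hy'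
  have hs : Function.Surjective ψ := by
    refine (LinearMap.injective_iff_surjective_of_finrank_eq_finrank ?_).1 hinj
    rw [(degreeLTEquiv K (Fintype.card ι)).finrank_eq]
    simp
  obtain ⟨y, hy⟩ := hs ⟨h, mem_degreeLT.2 hh⟩
  exact ⟨y, congrArg Subtype.val hy⟩

lemma hpol_transpose (P : Matrix ι ι K) (w y : ι → K) : hpol Pᵀ w y = hpol P y w := by
  rw [hpol, hpol, Matrix.charmatrix_transpose, ← Matrix.adjugate_transpose, Matrix.mulVec_transpose,
    dotProduct_comm, dotProduct_mulVec]

/-- The bilinear expression. -/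
def bpol (P : Matrix ι ι K) (R : Matrix κ κ K) (w : ι → K) (u : κ → K) (Z : Matrix ι κ K) : K[X] :=
  (C ∘ w) ⬝ᵥ ((charmatrix P).adjugate *ᵥ (Z.map C *ᵥ ((charmatrix R).adjugate *ᵥ (C ∘ u))))

lemma bpol_surj (P : Matrix ι ι K) (R : Matrix κ κ K) (w : ι → K) (u : κ → K)
    (hw : Cyc Pᵀ w) (hu : Cyc R u) (hι : 0 < Fintype.card ι) (hκ : 0 < Fintype.card κ) (h : K[X])
    (hh : h.natDegree < Fintype.card ι + Fintype.card κ - 1) : ∃ Z, bpol P R w u Z = h := by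
  let Φ : Matrix ι κ K →ₗ[K] K[X] :=
    { toFun := fun Z => bpol P R w u Z
      map_add' := by
        intro a b
        have : ((a + b).map C : Matrix ι κ K[X]) = a.map C + b.map C := by ext1 i j; simp
        rw [bpol, this, Matrix.add_mulVec, Matrix.mulVec_add, dotProduct_add]; rfl
      map_smul' := by
        intro a b
        have : ((a • b).map C : Matrix ι κ K[X]) = C a • b.map C := by ext1 i j; simp
        rw [bpol, this, Matrix.smul_mulVec, Matrix.mulVec_smul, dotProduct_smul, smul_eq_mul,
          ← Polynomial.smul_eq_C_mul]
        rfl }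
  have hprod : ∀ y φ, bpol P R w u (vecMulVec y φ) = hpol P w y * hpol R φ u := by
    intro y φ
    have : ((vecMulVec y φ).map C : Matrix ι κ K[X]) = vecMulVec (C ∘ y) (C ∘ φ) := by
      ext1 i j; simp [vecMulVec_apply]
    have h2 : ∀ z : κ → K[X], vecMulVec (C ∘ y) (C ∘ φ) *ᵥ z = ((C ∘ φ) ⬝ᵥ z) • (C ∘ y) := by
      intro z
      exact vecMulVec_mulVec_smul _ _ _
    rw [bpol, this, h2, Matrix.mulVec_smul, dotProduct_smul, smul_eq_mul, mul_comm]
    rfl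
  have hmon : ∀ k, k < Fintype.card ι + Fintype.card κ - 1 → (X ^ k : K[X]) ∈ LinearMap.range Φ := by
    intro k hk
    obtain ⟨i, j, hi, hj, rfl⟩ : ∃ i j, i < Fintype.card ι ∧ j < Fintype.card κ ∧ k = i + j := by
      rcases lt_or_ge k (Fintype.card ι) with h | h
      · exact ⟨k, 0, h, hκ, rfl⟩
      · exact ⟨Fintype.card ι - 1, k - (Fintype.card ι - 1), by omega, by omega, by omega⟩
    obtain ⟨y, hy⟩ := hpol_surj P w hw (X ^ i) (by rw [degree_X_pow]; exact_mod_cast hi)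
    obtain ⟨φ, hφ⟩ := hpol_surj Rᵀ u (by rwa [Matrix.transpose_transpose]) (X ^ j)
      (by rw [degree_X_pow]; exact_mod_cast hj)
    refine ⟨vecMulVec y φ, ?_⟩
    rw [hpol_transpose] at hφ
    change bpol P R w u (vecMulVec y φ) = _
    rw [hprod, hy, hφ, pow_add]
  have : h ∈ LinearMap.range Φ := by
    rw [h.as_sum_range' _ hh]
    refine Submodule.sum_mem _ fun k hk => ?_
    rw [← Polynomial.smul_X_eq_monomial]
    exact Submodule.smul_mem _ _ (hmon k (Finset.mem_range.1 hk))
  exact this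

/-- The product `[[P, Z], [0, R]] * [[1, 0], [u wᵀ, 1]]`. -/
def blk (P : Matrix ι ι K) (R : Matrix κ κ K) (w : ι → K) (u : κ → K) (Z : Matrix ι κ K) :
    Matrix (ι ⊕ κ) (ι ⊕ κ) K :=
  fromBlocks P Z 0 R * fromBlocks 1 0 (vecMulVec u w) 1

lemma blk_charpoly (P : Matrix ι ι K) (R : Matrix κ κ K) (w : ι → K) (u : κ → K)
    (Z : Matrix ι κ K) :
    (blk P R w u Z).charpoly = P.charpoly * R.charpoly - X * bpol P R w u Z := by
  set T' : Matrix (ι ⊕ κ) (ι ⊕ κ) K := fromBlocks 1 0 (-vecMulVec u w) 1 with hT'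
  have hdet : (C.mapMatrix T').det = 1 := by
    rw [← RingHom.map_det, hT', Matrix.det_fromBlocks_zero₁₂]; simp
  have hprod : charmatrix (blk P R w u Z) * C.mapMatrix T' =
      fromBlocks (charmatrix P) (-(Z.map C)) (-(vecMulVec ((X : K[X]) • (C ∘ u)) (C ∘ w)))
        (charmatrix R) := by
    have h1 : blk P R w u Z * T' = fromBlocks P Z 0 R := by
      rw [blk, hT', Matrix.mul_assoc, Matrix.fromBlocks_multiply]
      simp
    rw [charmatrix, Matrix.sub_mul, ← map_mul, h1]
    ext1 i j
    rw [Matrix.sub_apply, Matrix.scalar_apply, Matrix.diagonal_mul]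
    rcases i with i | i <;> rcases j with j | j <;>
      simp [hT', charmatrix, vecMulVec_apply, Matrix.one_apply, Matrix.diagonal_apply, mul_assoc]
  have := det_block_dom (charmatrix P) (charmatrix_det_ne P) (charmatrix R) (charmatrix_det_ne R)
    (Z.map C) ((X : K[X]) • (C ∘ u)) (C ∘ w)
  rw [← hprod, Matrix.det_mul, hdet, mul_one, Matrix.mulVec_smul, Matrix.mulVec_smul,
    Matrix.mulVec_smul, dotProduct_smul, smul_eq_mul] at this
  exact this

lemma cyc_dual (P : Matrix ι ι K) (w : ι → K) (hw : Cyc Pᵀ w) (r : ℕ)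
    (hr : Fintype.card ι = r + 1) :
    ∃ x, Cyc P x ∧ (∀ k < r, w ⬝ᵥ (P ^ k *ᵥ x) = 0) ∧ w ⬝ᵥ (P ^ r *ᵥ x) = 1 := by
  obtain ⟨H, h1, h2⟩ := krylov_inv Pᵀ w hw (r + 1) hr
  set x : ι → K := H (Fin.last r) with hx
  have key : ∀ k : Fin (r + 1), w ⬝ᵥ (P ^ (k : ℕ) *ᵥ x) = if Fin.last r = k then 1 else 0 := by
    intro k
    have := congrFun (congrFun h2 (Fin.last r)) k
    rw [Matrix.one_apply] at this
    rw [← this, Matrix.mul_apply', dotProduct_comm]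
    have e : (fun j => krylov Pᵀ w (r + 1) j k) = w ᵥ* P ^ (k : ℕ) := by
      ext j
      simp only [krylov, Matrix.of_apply]
      rw [← Matrix.transpose_pow, Matrix.mulVec_transpose]
    rw [e]
    change (P ^ (k : ℕ) *ᵥ x) ⬝ᵥ w = x ⬝ᵥ (w ᵥ* P ^ (k : ℕ))
    rw [dotProduct_comm, dotProduct_mulVec, dotProduct_comm]
  have key0 : ∀ k < r, w ⬝ᵥ (P ^ k *ᵥ x) = 0 := by
    intro k hk
    have := key ⟨k, by omega⟩
    rw [if_neg (by intro h; have := congrArg Fin.val h; simp at this; omega)] at this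
    exact this
  have key1 : w ⬝ᵥ (P ^ r *ᵥ x) = 1 := by simpa using key (Fin.last r)
  refine ⟨x, cyc_of_inj P x fun p hp hpx => ?_, key0, key1⟩
  by_contra hp0
  rw [degree_eq_natDegree hp0, hr] at hp
  have hm : p.natDegree < r + 1 := by exact_mod_cast hp
  have h3 : w ⬝ᵥ (P ^ (r - p.natDegree) *ᵥ (aeval P p *ᵥ x)) = 0 := by rw [hpx]; simp
  rw [Matrix.mulVec_mulVec, aeval_eq_sum_range, Finset.mul_sum, Matrix.sum_mulVec,
    dotProduct_sum, Finset.sum_range_succ, Finset.sum_eq_zero, zero_add] at h3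
  · rw [Matrix.mul_smul, ← pow_add, Nat.sub_add_cancel (by omega), Matrix.smul_mulVec,
      dotProduct_smul, key1, smul_eq_mul, mul_one] at h3
    exact hp0 (leadingCoeff_eq_zero.1 h3)
  · intro i hi
    have := Finset.mem_range.1 hi
    rw [Matrix.mul_smul, ← pow_add, Matrix.smul_mulVec, dotProduct_smul, key0 _ (by omega),
      smul_zero]

lemma blk_mulVec (P : Matrix ι ι K) (R : Matrix κ κ K) (w : ι → K) (u : κ → K)
    (Z : Matrix ι κ K) (y : ι → K) (z : κ → K) :
    blk P R w u Z *ᵥ (Sum.elim y z) = Sum.elim (P *ᵥ y + Z *ᵥ z + (w ⬝ᵥ y) • (Z *ᵥ u))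
      (R *ᵥ z + (w ⬝ᵥ y) • (R *ᵥ u)) := by
  have e : vecMulVec u w *ᵥ y = (w ⬝ᵥ y) • u :=
    vecMulVec_mulVec_smul _ _ _
  rw [blk, ← Matrix.mulVec_mulVec, Matrix.fromBlocks_mulVec, Matrix.fromBlocks_mulVec]
  simp only [Sum.elim_comp_inl, Sum.elim_comp_inr, Matrix.one_mulVec, Matrix.zero_mulVec, add_zero,
    zero_add, e, Matrix.mulVec_add, Matrix.mulVec_smul]
  congr 1
  · abel
  · abel

lemma blk_cyc (P : Matrix ι ι K) (R : Matrix κ κ K) (w : ι → K) (u : κ → K)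
    (hw : Cyc Pᵀ w) (hu : Cyc R u) (hι : 0 < Fintype.card ι) (hR : IsUnit R.det)
    (Z : Matrix ι κ K) : ∃ v, Cyc (blk P R w u Z) v := by
  obtain ⟨r, hr⟩ : ∃ r, Fintype.card ι = r + 1 := ⟨Fintype.card ι - 1, by omega⟩
  obtain ⟨x, hx, hx0, hx1⟩ := cyc_dual P w hw r hr
  refine ⟨Sum.elim x 0, fun W hv hW => ?_⟩
  have hpow : ∀ k ≤ r, Sum.elim (P ^ k *ᵥ x) (0 : κ → K) ∈ W := by
    intro k
    induction k with
    | zero => intro _; simpa using hv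
    | succ k ih =>
      intro hk
      have := hW _ (ih (by omega))
      rw [blk_mulVec, hx0 k (by omega)] at this
      simpa [pow_succ', Matrix.mulVec_mulVec] using this
  have hadd : ∀ (a b : ι → K) (c d : κ → K),
      Sum.elim (a + b) (c + d) = Sum.elim a c + Sum.elim b d := by
    intro a b c d; ext i; cases i <;> simp
  have hsub : ∀ (a b : ι → K) (c d : κ → K),
      Sum.elim (a - b) (c - d) = Sum.elim a c - Sum.elim b d := by
    intro a b c d; ext i; cases i <;> simp
  let incl : (ι → K) →ₗ[K] (ι ⊕ κ → K) :=
    { toFun := fun y => Sum.elim y 0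
      map_add' := by intro a b; rw [← hadd]; simp
      map_smul' := by intro a b; ext i; cases i <;> simp }
  let incr : (κ → K) →ₗ[K] (ι ⊕ κ → K) :=
    { toFun := fun y => Sum.elim 0 y
      map_add' := by intro a b; rw [← hadd]; simp
      map_smul' := by intro a b; ext i; cases i <;> simp }
  have h1 : ∀ y : ι → K, Sum.elim y (0 : κ → K) ∈ W := by
    intro y
    obtain ⟨H, e1, e2⟩ := krylov_inv P x hx (r + 1) hr
    have : y = krylov P x (r + 1) *ᵥ (H *ᵥ y) := by
      rw [Matrix.mulVec_mulVec, e1, Matrix.one_mulVec]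
    rw [krylov_mulVec] at this
    change y ∈ W.comap incl
    rw [this]
    exact Submodule.sum_mem _ fun j _ => Submodule.smul_mem _ _ (hpow j (by have := j.2; omega))
  have hsplit : ∀ (y : ι → K) (z : κ → K), Sum.elim y z ∈ W → Sum.elim (0 : ι → K) z ∈ W := by
    intro y z h
    have := W.sub_mem h (h1 y)
    rw [← hsub] at this
    simpa using this
  have h2 : (W.comap incr).comap R.mulVecLin = ⊤ := by
    apply hu
    · have := hW _ (hpow r le_rfl)
      rw [blk_mulVec, hx1] at this
      have := hsplit _ _ this
      change Sum.elim (0 : ι → K) (R *ᵥ u) ∈ W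
      simpa using this
    · intro z hz
      have := hW _ hz
      change blk P R w u Z *ᵥ (Sum.elim 0 (R *ᵥ z)) ∈ W at this
      rw [blk_mulVec] at this
      have := hsplit _ _ this
      change Sum.elim (0 : ι → K) (R *ᵥ (R *ᵥ z)) ∈ W
      simpa using this
  rw [eq_top_iff]
  intro v _
  have hz : R⁻¹ *ᵥ (v ∘ Sum.inr) ∈ (W.comap incr).comap R.mulVecLin := by rw [h2]; trivial
  have hz' : Sum.elim (0 : ι → K) (v ∘ Sum.inr) ∈ W := by
    have : R *ᵥ (R⁻¹ *ᵥ (v ∘ Sum.inr)) ∈ W.comap incr := hz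
    rw [Matrix.mulVec_mulVec, Matrix.mul_nonsing_inv _ hR, Matrix.one_mulVec] at this
    exact this
  have := W.add_mem (h1 (v ∘ Sum.inl)) hz'
  rw [← hadd, add_zero, zero_add, Sum.elim_comp_inl_inr] at this
  exact this

lemma completion (P : Matrix ι ι K) (R : Matrix κ κ K) (w : ι → K) (u : κ → K)
    (hw : Cyc Pᵀ w) (hu : Cyc R u) (hι : 0 < Fintype.card ι) (hκ : 0 < Fintype.card κ)
    (hR : IsUnit R.det) (p : K[X]) (hp : p.Monic)
    (hdeg : p.natDegree = Fintype.card ι + Fintype.card κ)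
    (h0 : p.coeff 0 = (-1) ^ (Fintype.card ι + Fintype.card κ) * (P.det * R.det)) :
    ∃ Z, (blk P R w u Z).charpoly = p ∧ ∃ v, Cyc (blk P R w u Z) v := by
  set q := P.charpoly * R.charpoly with hq
  have hqm : q.Monic := P.charpoly_monic.mul R.charpoly_monic
  have hqd : q.natDegree = Fintype.card ι + Fintype.card κ := by
    rw [hq, P.charpoly_monic.natDegree_mul R.charpoly_monic, P.charpoly_natDegree_eq_dim,
      R.charpoly_natDegree_eq_dim]
  have hlt : (q - p).degree < (Fintype.card ι + Fintype.card κ : ℕ) := by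
    have := Polynomial.degree_sub_lt_left (p := q) (q := p)
      (by rw [degree_eq_natDegree hqm.ne_zero, degree_eq_natDegree hp.ne_zero, hqd, hdeg])
      hqm.ne_zero (by rw [hqm.leadingCoeff, hp.leadingCoeff])
    rwa [degree_eq_natDegree hqm.ne_zero, hqd] at this
  have hc : (q - p).coeff 0 = 0 := by
    have e1 := Matrix.det_eq_sign_charpoly_coeff P
    have e2 := Matrix.det_eq_sign_charpoly_coeff R
    rw [coeff_sub, h0, hq, mul_coeff_zero, e1, e2, pow_add]
    have s1 : ((-1 : K) ^ Fintype.card ι) * (-1) ^ Fintype.card ι = 1 := by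
      rw [← mul_pow]; simp
    have s2 : ((-1 : K) ^ Fintype.card κ) * (-1) ^ Fintype.card κ = 1 := by
      rw [← mul_pow]; simp
    linear_combination (-P.charpoly.coeff 0 * R.charpoly.coeff 0) * s1 * 1 +
      (-P.charpoly.coeff 0 * R.charpoly.coeff 0) * (-1 : K) ^ Fintype.card ι *
        (-1) ^ Fintype.card ι * s2
  have hX : X * (q - p).divX = q - p := by
    have := Polynomial.X_mul_divX_add (q - p)
    rw [hc] at this
    simpa using this
  obtain ⟨Z, hZ⟩ := bpol_surj P R w u hw hu hι hκ (q - p).divX (by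
    rw [natDegree_divX_eq_natDegree_tsub_one]
    have : (q - p).natDegree < Fintype.card ι + Fintype.card κ := by
      by_cases hz : q - p = 0
      · rw [hz]; simp; omega
      · rw [degree_eq_natDegree hz] at hlt
        exact_mod_cast hlt
    omega)
  refine ⟨Z, ?_, blk_cyc P R w u hw hu hι hR Z⟩
  rw [blk_charpoly, hZ, hX]
  ring

end completion


section decomposition

lemma aeval_fromBlocks_diag {ι κ K : Type*} [Fintype ι] [DecidableEq ι] [Fintype κ] [DecidableEq κ]
    [Field K] (M₁ : Matrix ι ι K) (M₂ : Matrix κ κ K) (p : K[X]) :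
    aeval (fromBlocks M₁ 0 0 M₂) p = fromBlocks (aeval M₁ p) 0 0 (aeval M₂ p) := by
  induction p using Polynomial.induction_on' with
  | add p q hp hq => simp [hp, hq, Matrix.fromBlocks_add]
  | monomial k a =>
    have hpow : (fromBlocks M₁ 0 0 M₂) ^ k = fromBlocks (M₁ ^ k) 0 0 (M₂ ^ k) := by
      induction k with
      | zero => simp
      | succ k ih => rw [pow_succ, ih, Matrix.fromBlocks_multiply]; simp [pow_succ]
    rw [aeval_monomial, aeval_monomial, aeval_monomial, hpow, ← Algebra.smul_def,
      ← Algebra.smul_def, ← Algebra.smul_def, Matrix.fromBlocks_smul]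
    simp

lemma aeval_intertwine {ι κ K : Type*} [Fintype ι] [DecidableEq ι] [Fintype κ] [DecidableEq κ]
    [Field K] (M₁ : Matrix ι ι K) (M₂ : Matrix κ κ K) (H : Matrix ι κ K)
    (h : M₁ * H = H * M₂) (p : K[X]) : aeval M₁ p * H = H * aeval M₂ p := by
  induction p using Polynomial.induction_on' with
  | add p q hp hq => simp [hp, hq, Matrix.add_mul, Matrix.mul_add]
  | monomial k a =>
    have hpow : M₁ ^ k * H = H * M₂ ^ k := by
      induction k with
      | zero => simp
      | succ k ih => rw [pow_succ, Matrix.mul_assoc, h, ← Matrix.mul_assoc, ih, pow_succ,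
          Matrix.mul_assoc]
    rw [aeval_monomial, aeval_monomial, ← Algebra.smul_def, ← Algebra.smul_def, Matrix.smul_mul,
      hpow, Matrix.mul_smul]

lemma sylvester {ι κ K : Type*} [Fintype ι] [DecidableEq ι] [Fintype κ] [DecidableEq κ]
    [Field K] (M₁ : Matrix ι ι K) (M₂ : Matrix κ κ K) (f g : K[X]) (hfg : IsCoprime f g)
    (hf : aeval M₁ f = 0) (hg : aeval M₂ g = 0) (Z : Matrix ι κ K) :
    ∃ H : Matrix ι κ K, H * M₂ - M₁ * H = Z := by
  let Φ : Matrix ι κ K →ₗ[K] Matrix ι κ K :=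
    { toFun := fun H => H * M₂ - M₁ * H
      map_add' := by intro a b; rw [Matrix.add_mul, Matrix.mul_add]; abel
      map_smul' := by intro a b; simp [smul_sub] }
  have hinj : Function.Injective Φ := by
    rw [← LinearMap.ker_eq_bot, LinearMap.ker_eq_bot']
    intro H hH
    have h1 : M₁ * H = H * M₂ := (sub_eq_zero.1 hH).symm
    have h2 := aeval_intertwine M₁ M₂ H h1 f
    rw [hf, Matrix.zero_mul] at h2
    obtain ⟨a, b, hab⟩ := hfg
    have h3 : aeval M₂ (f * a + b * g) = 1 := by rw [mul_comm f a, hab, map_one]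
    rw [map_add, map_mul, map_mul, hg, mul_zero, add_zero] at h3
    calc H = H * (aeval M₂ f * aeval M₂ a) := by rw [h3, Matrix.mul_one]
      _ = 0 := by rw [← Matrix.mul_assoc, ← h2, Matrix.zero_mul]
  exact (LinearMap.injective_iff_surjective.1 hinj) Z

lemma aeval_ne_zero_of_charpoly {ι K : Type*} [Fintype ι] [DecidableEq ι] [Field K]
    (M : Matrix ι ι K) (f g : K[X]) (hf : 0 < f.natDegree) (hfg : IsCoprime f g)
    (hM : M.charpoly = f * g) : aeval M g ≠ 0 := by
  intro h0
  let L := AlgebraicClosure K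
  obtain ⟨μ, hμ⟩ := IsAlgClosed.exists_aeval_eq_zero L f (by
    intro h; rw [natDegree_eq_of_degree_eq_some (n := 0) (by simpa using h)] at hf
    exact lt_irrefl _ hf)
  set φ : Matrix ι ι K →ₐ[K] Matrix ι ι L := (Algebra.ofId K L).mapMatrix with hφ
  have hroot : (φ M).charpoly.IsRoot μ := by
    have : φ M = M.map (algebraMap K L) := rfl
    rw [this, Matrix.charpoly_map, hM, Polynomial.IsRoot, Polynomial.map_mul, eval_mul,
      eval_map_algebraMap, hμ, zero_mul]
  have hs := Matrix.mem_spectrum_of_isRoot_charpoly hroot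
  have h1 : aeval (φ M) (g.map (algebraMap K L)) = 0 := by
    rw [aeval_map_algebraMap, aeval_algHom_apply, h0, map_zero]
  have h2 := spectrum.subset_polynomial_aeval (φ M) (g.map (algebraMap K L)) ⟨μ, hs, rfl⟩
  rw [h1] at h2
  have : Nontrivial (Matrix ι ι L) := by
    by_contra hn
    rw [not_nontrivial_iff_subsingleton] at hn
    rw [spectrum.of_subsingleton] at hs
    exact hs
  rw [spectrum.zero_eq, Set.mem_singleton_iff] at h2
  change eval μ (g.map (algebraMap K L)) = 0 at h2
  rw [eval_map_algebraMap] at h2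
  obtain ⟨a, b, hab⟩ := hfg
  have := congrArg (aeval μ) hab
  rw [map_add, map_mul, map_mul, hμ, h2] at this
  simp at this

lemma nonprimary_block {n : ℕ} {K : Type*} [Field K] (M : Matrix (Fin n) (Fin n) K)
    (hM : IsNonprimary M) : ∃ r s : ℕ, 0 < r ∧ 0 < s ∧ r + s = n ∧
      ∃ (M₁ : Matrix (Fin r) (Fin r) K) (M₂ : Matrix (Fin s) (Fin s) K),
        ∀ Z : Matrix (Fin r) (Fin s) K, ∃ (G : Matrix (Fin n) (Fin r ⊕ Fin s) K)
          (H : Matrix (Fin r ⊕ Fin s) (Fin n) K), G * H = 1 ∧ H * G = 1 ∧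
            M = G * fromBlocks M₁ Z 0 M₂ * H := by
  obtain ⟨f, g, hfm, hgm, hf, hg, hfg, hch⟩ := hM
  set T : (Fin n → K) →ₗ[K] (Fin n → K) := Matrix.toLin' M with hT
  have haev : ∀ p : K[X], aeval T p = Matrix.toLin' (aeval M p) := by
    intro p
    have := aeval_algHom_apply (Matrix.toLinAlgEquiv' : Matrix (Fin n) (Fin n) K ≃ₐ[K] _) M p
    exact this
  have hfgM : aeval M f * aeval M g = 0 := by
    rw [← map_mul, ← hch, Matrix.aeval_self_charpoly]
  set V₁ := LinearMap.ker (aeval T f) with hV₁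
  set V₂ := LinearMap.ker (aeval T g) with hV₂
  have hcompl : IsCompl V₁ V₂ := by
    refine ⟨disjoint_ker_aeval_of_isCoprime T hfg, ?_⟩
    rw [codisjoint_iff, sup_ker_aeval_eq_ker_aeval_mul_of_coprime T hfg, haev, map_mul, hfgM]
    simp
  have hfg0 : ∀ x, aeval T f (aeval T g x) = 0 := by
    intro x
    rw [haev, haev, Matrix.toLin'_apply, Matrix.toLin'_apply, Matrix.mulVec_mulVec, hfgM,
      Matrix.zero_mulVec]
  have hgf0 : ∀ x, aeval T g (aeval T f x) = 0 := by
    intro x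
    have : aeval M g * aeval M f = 0 := by rw [← map_mul, mul_comm, map_mul, hfgM]
    rw [haev, haev, Matrix.toLin'_apply, Matrix.toLin'_apply, Matrix.mulVec_mulVec, this,
      Matrix.zero_mulVec]
  have hV₁0 : V₁ ≠ ⊥ := by
    intro h
    apply aeval_ne_zero_of_charpoly M f g hf hfg hch
    apply Matrix.toLin'.injective
    rw [← haev, map_zero]
    refine LinearMap.ext fun x => ?_
    exact LinearMap.ker_eq_bot.1 h (by simp [hfg0])
  have hV₂0 : V₂ ≠ ⊥ := by
    intro h
    apply aeval_ne_zero_of_charpoly M g f hg hfg.symm (by rw [hch, mul_comm])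
    apply Matrix.toLin'.injective
    rw [← haev, map_zero]
    refine LinearMap.ext fun x => ?_
    exact LinearMap.ker_eq_bot.1 h (by simp [hgf0])
  have hr : 0 < Module.finrank K V₁ := by
    rw [Nat.pos_iff_ne_zero]; intro h; exact hV₁0 (Submodule.finrank_eq_zero.1 h)
  have hs : 0 < Module.finrank K V₂ := by
    rw [Nat.pos_iff_ne_zero]; intro h; exact hV₂0 (Submodule.finrank_eq_zero.1 h)
  set r := Module.finrank K V₁ with hrdef
  set s := Module.finrank K V₂ with hsdef
  let b₁ : Module.Basis (Fin r) K V₁ := Module.finBasis K V₁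
  let b₂ : Module.Basis (Fin s) K V₂ := Module.finBasis K V₂
  let b : Module.Basis (Fin r ⊕ Fin s) K (Fin n → K) :=
    (b₁.prod b₂).map (Submodule.prodEquivOfIsCompl V₁ V₂ hcompl)
  have hb1 : ∀ i, b (Sum.inl i) = b₁ i := by intro i; simp [b]
  have hb2 : ∀ i, b (Sum.inr i) = b₂ i := by intro i; simp [b]
  have hrs : r + s = n := by
    have := Module.finrank_eq_card_basis b
    simpa using this.symm
  have hinv : ∀ (p : K[X]) (x : Fin n → K), aeval T p x = 0 → aeval T p (T x) = 0 := by
    intro p x hx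
    have : aeval T p * T = T * aeval T p := by
      have := congrArg (aeval T) (mul_comm p X)
      simpa using this
    have := congrArg (fun F => F x) this
    simp only [Module.End.mul_apply, hx, map_zero] at this
    exact this
  set M' := LinearMap.toMatrixAlgEquiv b T with hM'
  have hoff1 : M'.toBlocks₂₁ = 0 := by
    ext j i
    simp only [Matrix.toBlocks₂₁, Matrix.of_apply, hM', LinearMap.toMatrixAlgEquiv_apply, hb1]
    have hmem : T (b₁ i) ∈ V₁ := hinv f _ (b₁ i).2
    have : (Submodule.prodEquivOfIsCompl V₁ V₂ hcompl).symm (T (b₁ i)) = (⟨_, hmem⟩, 0) :=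
      Submodule.prodEquivOfIsCompl_symm_apply_left V₁ V₂ hcompl ⟨_, hmem⟩
    simp [b, this]
  have hoff2 : M'.toBlocks₁₂ = 0 := by
    ext j i
    simp only [Matrix.toBlocks₁₂, Matrix.of_apply, hM', LinearMap.toMatrixAlgEquiv_apply, hb2]
    have hmem : T (b₂ i) ∈ V₂ := hinv g _ (b₂ i).2
    have : (Submodule.prodEquivOfIsCompl V₁ V₂ hcompl).symm (T (b₂ i)) = (0, ⟨_, hmem⟩) :=
      Submodule.prodEquivOfIsCompl_symm_apply_right V₁ V₂ hcompl ⟨_, hmem⟩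
    simp [b, this]
  have hblk : M' = fromBlocks M'.toBlocks₁₁ 0 0 M'.toBlocks₂₂ := by
    rw [← hoff1, ← hoff2, Matrix.fromBlocks_toBlocks]
  have haevM' : ∀ p : K[X], fromBlocks (aeval M'.toBlocks₁₁ p) 0 0 (aeval M'.toBlocks₂₂ p)
      = LinearMap.toMatrixAlgEquiv b (aeval T p) := by
    intro p
    rw [← aeval_fromBlocks_diag, ← hblk, hM']
    exact aeval_algHom_apply (LinearMap.toMatrixAlgEquiv b) T p
  have hf1 : aeval M'.toBlocks₁₁ f = 0 := by
    ext i j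
    have := congrFun (congrFun (haevM' f) (Sum.inl i)) (Sum.inl j)
    rw [Matrix.fromBlocks_apply₁₁, LinearMap.toMatrixAlgEquiv_apply, hb1] at this
    have h0 : aeval T f (b₁ j) = 0 := (b₁ j).2
    rw [this, h0]; simp
  have hg2 : aeval M'.toBlocks₂₂ g = 0 := by
    ext i j
    have := congrFun (congrFun (haevM' g) (Sum.inr i)) (Sum.inr j)
    rw [Matrix.fromBlocks_apply₂₂, LinearMap.toMatrixAlgEquiv_apply, hb2] at this
    have h0 : aeval T g (b₂ j) = 0 := (b₂ j).2
    rw [this, h0]; simp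
  refine ⟨r, s, hr, hs, hrs, M'.toBlocks₁₁, M'.toBlocks₂₂, fun Z => ?_⟩
  obtain ⟨S, hS⟩ := sylvester _ _ f g hfg hf1 hg2 Z
  set e := Pi.basisFun K (Fin n) with he
  have k1 : e.toMatrix b * b.toMatrix e = 1 := Module.Basis.toMatrix_mul_toMatrix_flip _ _
  have k2 : b.toMatrix e * e.toMatrix b = 1 := Module.Basis.toMatrix_mul_toMatrix_flip _ _
  have k3 : M = e.toMatrix b * M' * b.toMatrix e := by
    have := basis_toMatrix_mul_linearMap_toMatrix_mul_basis_toMatrix e b e b T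
    have h2 : LinearMap.toMatrix e e T = M := by
      rw [he, LinearMap.toMatrix_eq_toMatrix', hT, LinearMap.toMatrix'_toLin']
    rw [h2] at this
    exact this.symm
  set E : Matrix (Fin r ⊕ Fin s) (Fin r ⊕ Fin s) K := fromBlocks 1 S 0 1 with hE
  set E' : Matrix (Fin r ⊕ Fin s) (Fin r ⊕ Fin s) K := fromBlocks 1 (-S) 0 1 with hE'
  have e1 : E * E' = 1 := by rw [hE, hE', Matrix.fromBlocks_multiply]; simp
  have e2 : E' * E = 1 := by rw [hE, hE', Matrix.fromBlocks_multiply]; simp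
  have e3 : fromBlocks M'.toBlocks₁₁ Z 0 M'.toBlocks₂₂ * E = E * M' := by
    nth_rewrite 3 [hblk]
    rw [hE, Matrix.fromBlocks_multiply, Matrix.fromBlocks_multiply, ← hS]
    simp
  refine ⟨e.toMatrix b * E', E * b.toMatrix e, ?_, ?_, ?_⟩
  · rw [Matrix.mul_assoc, ← Matrix.mul_assoc E', e2, Matrix.one_mul, k1]
  · rw [Matrix.mul_assoc, ← Matrix.mul_assoc _ _ E', k2, Matrix.one_mul, e1]
  · calc M = e.toMatrix b * ((E' * E) * M') * b.toMatrix e := by rw [e2, Matrix.one_mul, ← k3]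
      _ = e.toMatrix b * (E' * (E * M')) * b.toMatrix e := by rw [Matrix.mul_assoc E']
      _ = _ := by rw [← e3]; simp only [Matrix.mul_assoc]

end decomposition

lemma Cyc.neg {ι : Type*} [Fintype ι] {K : Type*} [Field K] {A : Matrix ι ι K} {v : ι → K}
    (h : Cyc A v) : Cyc A (-v) :=
  fun W hv hW => h W (by simpa using W.neg_mem hv) hW

theorem product_of_cyclic_classes_contains_nonprimary {K : Type*} [Field K] {n : ℕ}
    (hn : 2 ≤ n) (A B : Matrix (Fin n) (Fin n) K)
    (hA : IsUnit A.det) (hB : IsUnit B.det)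
    (hcA : IsCyclicMat A) (hcB : IsCyclicMat B)
    (M : Matrix (Fin n) (Fin n) K) (hM : IsUnit M.det)
    (hMnp : IsNonprimary M) (hdet : M.det = A.det * B.det) :
    ∃ X Y : Matrix (Fin n) (Fin n) K, IsUnit X.det ∧ IsUnit Y.det ∧
      M = (X * A * X⁻¹) * (Y * B * Y⁻¹) := by
  obtain ⟨r, s, hr, hs, hrs, M₁, M₂, hblk⟩ := nonprimary_block M hMnp
  have hA0 : A.det ≠ 0 := hA.ne_zero
  have hB0 : B.det ≠ 0 := hB.ne_zero
  have hM0 : M.det ≠ 0 := hM.ne_zero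
  have hdM : M.det = M₁.det * M₂.det := by
    obtain ⟨G, H, h1, h2, h3⟩ := hblk 0
    rw [h3, Matrix.det_conj_of_mul_eq_one h1 h2, Matrix.det_fromBlocks_zero₂₁]
  have hM1 : M₁.det ≠ 0 := by intro h; rw [h, zero_mul] at hdM; exact hM0 hdM
  have hM2 : M₂.det ≠ 0 := by intro h; rw [h, mul_zero] at hdM; exact hM0 hdM
  -- common cyclic vectors
  obtain ⟨R, C, u, hRC, hRd, hRu, hCu⟩ := common_cyc hs M₂ hM2 1 one_ne_zero
  obtain ⟨R', C', w, hRC', hRd', hRw, hCw⟩ := common_cyc hr M₁ᵀ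
    (by rwa [Matrix.det_transpose]) (M₁.det / A.det) (div_ne_zero hM1 hA0)
  set P := C'ᵀ with hP
  set Q := R'ᵀ with hQ
  have hPQ : M₁ = P * Q := by
    rw [hP, hQ, ← Matrix.transpose_mul, ← hRC', Matrix.transpose_transpose]
  have hQd : Q.det = M₁.det / A.det := by rw [hQ, Matrix.det_transpose, hRd']
  have hCd : C.det = M₂.det := by rw [hRC, Matrix.det_mul, hRd, one_mul]
  have hPd : P.det = A.det := by
    have h1 : M₁.det = P.det * (M₁.det / A.det) := by rw [← hQd, ← Matrix.det_mul, ← hPQ]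
    field_simp at h1
    exact h1.symm
  have hPw : Cyc Pᵀ w := by rw [hP, Matrix.transpose_transpose]; exact hCw
  have hQw : Cyc Qᵀ w := by rw [hQ, Matrix.transpose_transpose]; exact hRw
  have hcard : Fintype.card (Fin r) + Fintype.card (Fin s) = n := by simpa using hrs
  have hcoeff : ∀ D : Matrix (Fin n) (Fin n) K, D.charpoly.coeff 0 = (-1) ^ n * D.det := by
    intro D
    rw [Matrix.det_eq_sign_charpoly_coeff D, ← mul_assoc, Fintype.card_fin, ← mul_pow]
    simp
  obtain ⟨A2, hA2, vA, hvA⟩ := completion P R w u hPw hRu (by simpa using hr) (by simpa using hs)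
    (by rw [hRd]; exact isUnit_one) A.charpoly A.charpoly_monic
    (by rw [hcard, A.charpoly_natDegree_eq_dim, Fintype.card_fin])
    (by rw [hcard, hcoeff, hPd, hRd, mul_one])
  obtain ⟨B2, hB2, vB, hvB⟩ := completion Q C w (-u) hQw hCu.neg (by simpa using hr)
    (by simpa using hs) (by rw [hCd]; exact isUnit_iff_ne_zero.2 hM2) B.charpoly B.charpoly_monic
    (by rw [hcard, B.charpoly_natDegree_eq_dim, Fintype.card_fin])
    (by
      rw [hcard, hcoeff, hQd, hCd]
      have : B.det = M₁.det * M₂.det / A.det := by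
        rw [← hdM, hdet]; field_simp
      rw [this]; ring)
  obtain ⟨vA', hvA'⟩ := exists_cyc_of_isCyclicMat A hcA
  obtain ⟨vB', hvB'⟩ := exists_cyc_of_isCyclicMat B hcB
  have hcard' : Fintype.card (Fin n) = Fintype.card (Fin r ⊕ Fin s) := by simp [hrs]
  obtain ⟨G1, H1, a1, a2, a3⟩ := similar_of_cyc A vA' hvA' _ vA hvA hcard' hA2.symm
  obtain ⟨G2, H2, b1, b2, b3⟩ := similar_of_cyc B vB' hvB' _ vB hvB hcard' hB2.symm
  obtain ⟨G, H, c1, c2, c3⟩ := hblk (P * B2 + A2 * C)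
  set T : Matrix (Fin r ⊕ Fin s) (Fin r ⊕ Fin s) K := fromBlocks 1 0 (vecMulVec u w) 1 with hT
  set T' : Matrix (Fin r ⊕ Fin s) (Fin r ⊕ Fin s) K :=
    fromBlocks 1 0 (vecMulVec (-u) w) 1 with hT'
  have t1 : T * T' = 1 := by
    rw [hT, hT', Matrix.fromBlocks_multiply]; simp [Matrix.neg_vecMulVec]
  have t2 : T' * T = 1 := by
    rw [hT, hT', Matrix.fromBlocks_multiply]; simp [Matrix.neg_vecMulVec]
  have hprod : fromBlocks M₁ (P * B2 + A2 * C) 0 M₂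
      = blk P R w u A2 * (T' * blk Q C w (-u) B2 * T) := by
    have e : fromBlocks P A2 0 R * fromBlocks Q B2 0 C
        = fromBlocks M₁ (P * B2 + A2 * C) 0 M₂ := by
      rw [Matrix.fromBlocks_multiply, hPQ, hRC]; simp
    rw [← e, blk, blk, ← hT, ← hT']
    calc fromBlocks P A2 0 R * fromBlocks Q B2 0 C
        = fromBlocks P A2 0 R * (T * T') * fromBlocks Q B2 0 C * (T' * T) := by
          rw [t1, t2, Matrix.mul_one, Matrix.mul_one]
      _ = _ := by simp only [Matrix.mul_assoc]
  have x1 : (G * G1) * (H1 * H) = 1 := by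
    rw [Matrix.mul_assoc, ← Matrix.mul_assoc G1, a1, Matrix.one_mul, c1]
  have y1 : (G * T' * G2) * (H2 * T * H) = 1 := by
    calc _ = G * (T' * (G2 * H2) * T) * H := by simp only [Matrix.mul_assoc]
      _ = 1 := by rw [b1, Matrix.mul_one, t2, Matrix.mul_one, c1]
  refine ⟨G * G1, G * T' * G2, Matrix.isUnit_det_of_right_inverse x1,
    Matrix.isUnit_det_of_right_inverse y1, ?_⟩
  rw [Matrix.inv_eq_right_inv x1, Matrix.inv_eq_right_inv y1, c3, hprod, a3, b3]
  calc G * (G1 * A * H1 * (T' * (G2 * B * H2) * T)) * H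
      = G * (G1 * A * H1 * (1 * (T' * (G2 * B * H2) * T))) * H := by rw [Matrix.one_mul]
    _ = _ := by rw [← c2]; simp only [Matrix.mul_assoc]
end
end
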